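/- Let G be a graph with minimum degree δ and C a longest cycle in G. If c̄ denotes the length of a longest cycle in G \ C (the number of vertices of such a cycle, with vertices counting as cycles of length 1 and edges as cycles of length 2), then |C| ≥ (c̄ + 1)(δ − c̄ + 1). -/

import Mathlib

open SimpleGraph

variable {V : Type*}

/-- `G` is `k`-connected: more than `k` vertices and removing fewer than `k`
vertices leaves a connected graph. -/
def KConnected (G : SimpleGraph V) [Fintype V] (k : ℕ) : Prop :=
  k < Fintype.card V ∧
    ∀ S : Finset V, S.card < k → (G.induce ((↑S : Set V)ᶜ)).Connected

/-- vertex connectivity `κ`. -/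
noncomputable def connectivity (G : SimpleGraph V) [Fintype V] : ℕ :=
  sSup {k | KConnected G k}

/-- independence number `α`. -/
noncomputable def indepNumber (G : SimpleGraph V) [Fintype V] : ℕ :=
  sSup {k | ∃ s : Finset V, (∀ u ∈ s, ∀ v ∈ s, ¬ G.Adj u v) ∧ s.card = k}

/-- circumference `c`: length of a longest cycle. -/
noncomputable def circumference (G : SimpleGraph V) [Fintype V] : ℕ :=
  sSup {n | ∃ (v : V) (w : G.Walk v v), w.IsCycle ∧ w.length = n}

/-- `w` is a longest cycle of `G`. -/
def IsLongestCycle {G : SimpleGraph V} {v : V} (w : G.Walk v v) : Prop :=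
  w.IsCycle ∧ ∀ (u : V) (w' : G.Walk u u), w'.IsCycle → w'.length ≤ w.length

/-- dominating cycle: every edge has an endpoint on the cycle. -/
def IsDominatingCycle {G : SimpleGraph V} {v : V} (w : G.Walk v v) : Prop :=
  w.IsCycle ∧ ∀ x y, G.Adj x y → x ∈ w.support ∨ y ∈ w.support

/-- generalized cycle of length `n` with vertex set `W`: single vertices are
cycles of length 1, edges are cycles of length 2. -/
def ExtCycle (G : SimpleGraph V) (W : Set V) (n : ℕ) : Prop :=
  (n = 1 ∧ ∃ v : V, W = {v}) ∨
  (n = 2 ∧ ∃ u v : V, G.Adj u v ∧ W = {u, v}) ∨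
  (3 ≤ n ∧ ∃ (v : V) (w : G.Walk v v), w.IsCycle ∧ w.length = n ∧
      W = {x | x ∈ w.support})

/-- `p̄`: the length of a longest path in `G \ C`. -/
noncomputable def pathBar (G : SimpleGraph V) [Fintype V] {v : V} (w : G.Walk v v) : ℕ :=
  sSup {n | ∃ (a b : {x : V | x ∉ w.support})
      (p : (G.induce {x : V | x ∉ w.support}).Walk a b), p.IsPath ∧ p.length = n}

/-- `c̄`: the length of a longest (generalized) cycle in `G \ C`. -/
noncomputable def cycBar (G : SimpleGraph V) [Fintype V] {v : V} (w : G.Walk v v) : ℕ :=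
  sSup {n | ∃ W, ExtCycle (G.induce {x : V | x ∉ w.support}) W n}

/-- `CD_m`-cycle: every (generalized) cycle of length at least `m` meets `w`. -/
def IsCDCycle (G : SimpleGraph V) {v : V} (w : G.Walk v v) (m : ℕ) : Prop :=
  w.IsCycle ∧ ∀ (W : Set V) (n : ℕ), ExtCycle G W n → m ≤ n → ∃ x ∈ W, x ∈ w.support

/-!
Let `C` be a longest cycle and `D` a longest cycle of `G \ C`, with `k` vertices. Inside `G \ C`,
start disjoint paths at the vertices of `D` so that as many vertices as possible lie on nontrivial
paths (Nikoghosyan's HC-extension). Consider a nontrivial path with second vertex `y` and last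
vertex `b`, and let `s` be the number of trivial paths whose vertex is adjacent to `y`. If `b` has
neighbours on other paths or at most `s` neighbours, then detours of `D` along the path exist and
the maximality of `D` yields `deg b + s < k`. Otherwise all neighbours of `b` lie on its path, which
therefore has more than `s` Pósa rotations, and each of the `s` vertices is assigned the end of a
rotation of its own. A vertex `v` of `D` with trivial path that is left without an end is its own
end; its degree is less than `k` plus the number of second vertices adjacent to it, and counting the
pairs `(v, y)` twice balances this excess against the terms `s`. This gives `k` ends whose degrees
in `G \ C` are at most `k - 1` on average, and any of them is joined to some member of any set of
`j` of them by a path in `G \ C` with at least `j` vertices.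

Hence the ends send at least `k * (δ - k + 1)` edges to `C`. If `a x` of them go to `x`, then two
vertices `x, y` of `C` with `a x, a y > 0` are joined by a detour of length `max (a x) (a y) + 1`
through `G \ C`, so they are at least that far apart on `C`, and summing over the gaps between such
vertices gives `∑ (a x + 1) ≤ |C|`, the sum being over the vertices with `a x > 0`. There are at
least `δ - k + 1` of these because `a x ≤ k`.
-/

section Paths

variable {α : Type*} {G : SimpleGraph α} {X Y : Set α} {a b c : α} {ℓ m : ℕ}

/-- Some path of `G` from `a` to `b` inside `X` has length at least `ℓ`. Only lower bounds on
lengths matter below, so `ℓ` may be decreased freely. -/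
def HasPathIn (G : SimpleGraph α) (X : Set α) (a b : α) (ℓ : ℕ) : Prop :=
  ∃ p : G.Walk a b, p.IsPath ∧ ℓ ≤ p.length ∧ ∀ x ∈ p.support, x ∈ X

theorem isPath_append {p : G.Walk a b} {q : G.Walk b c} (hp : p.IsPath) (hq : q.IsPath)
    (h : ∀ x ∈ p.support, x ∈ q.support → x = b) : (p.append q).IsPath := by
  induction p with
  | nil => simpa using hq
  | cons hadj p ih =>
    rw [Walk.cons_isPath_iff] at hp
    rw [Walk.cons_append, Walk.cons_isPath_iff, Walk.mem_support_append_iff]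
    refine ⟨ih hp.1 hq fun x hx => h x (by simp [hx]), ?_⟩
    rintro (hx | hx)
    · exact hp.2 hx
    · exact hp.2 (h _ (by simp) hx ▸ p.end_mem_support)

namespace HasPathIn

theorem refl (ha : a ∈ X) : HasPathIn G X a a 0 :=
  ⟨.nil, .nil, le_rfl, by simpa using ha⟩

theorem of_isPath {p : G.Walk a b} (hp : p.IsPath) :
    HasPathIn G {x | x ∈ p.support} a b p.length :=
  ⟨p, hp, le_rfl, fun _ => id⟩

theorem of_adj (h : G.Adj a b) : HasPathIn G {a, b} a b 1 :=
  ⟨h.toWalk, .of_adj h, by simp, by simp⟩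

theorem mono (h : HasPathIn G X a b ℓ) (hXY : X ⊆ Y) (hm : m ≤ ℓ) : HasPathIn G Y a b m :=
  let ⟨p, hp, hℓ, hX⟩ := h
  ⟨p, hp, hm.trans hℓ, fun x hx => hXY (hX x hx)⟩

theorem symm (h : HasPathIn G X a b ℓ) : HasPathIn G X b a ℓ :=
  let ⟨p, hp, hℓ, hX⟩ := h
  ⟨p.reverse, hp.reverse, by simpa using hℓ, by simpa using hX⟩

theorem trans (h₁ : HasPathIn G X a b ℓ) (h₂ : HasPathIn G Y b c m)
    (hXY : ∀ x ∈ X, x ∈ Y → x = b) : HasPathIn G (X ∪ Y) a c (ℓ + m) := by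
  obtain ⟨p, hp, hℓ, hX⟩ := h₁
  obtain ⟨q, hq, hm, hY⟩ := h₂
  refine ⟨p.append q, isPath_append hp hq fun x hx hx' => hXY x (hX x hx) (hY x hx'), ?_, ?_⟩
  · rw [Walk.length_append]
    exact add_le_add hℓ hm
  · intro x hx
    exact ((Walk.mem_support_append_iff _ _).1 hx).imp (hX x) (hY x)

theorem cons (hab : G.Adj a b) (ha : a ∉ X) (h : HasPathIn G X b c ℓ) :
    HasPathIn G (insert a X) a c (ℓ + 1) := by
  obtain ⟨p, hp, hℓ, hX⟩ := h
  refine ⟨.cons hab p, hp.cons fun h => ha (hX a h), by simpa using hℓ, ?_⟩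
  simpa using fun x hx => Or.inr (hX x hx)

theorem concat (h : HasPathIn G X a b ℓ) (hbc : G.Adj b c) (hc : c ∉ X) :
    HasPathIn G (insert c X) a c (ℓ + 1) :=
  (h.symm.cons hbc.symm hc).symm

theorem map_induce {s : Set α} {X : Set s} {a b : s} (h : HasPathIn (G.induce s) X a b ℓ) :
    HasPathIn G (Subtype.val '' X) a b ℓ := by
  obtain ⟨p, hp, hℓ, hX⟩ := h
  refine ⟨p.map (Embedding.induce s).toHom,
    (Walk.isPath_map_iff_of_injective Subtype.val_injective).2 hp,
    hℓ.trans_eq (p.length_map _).symm, ?_⟩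
  intro x hx
  obtain ⟨y, hy, rfl⟩ := List.mem_map.1 (Walk.support_map _ p ▸ hx)
  exact ⟨y, hX y hy, rfl⟩

end HasPathIn

theorem hasPathIn_of_injOn_Icc {f : ℕ → α} {i j : ℕ} (hij : i ≤ j)
    (hadj : ∀ k, i ≤ k → k < j → G.Adj (f k) (f (k + 1))) (hinj : Set.InjOn f (Set.Icc i j)) :
    HasPathIn G (f '' Set.Icc i j) (f i) (f j) (j - i) := by
  induction j, hij using Nat.le_induction with
  | base => exact (HasPathIn.refl (Set.mem_image_of_mem _ (by simp))).mono subset_rfl (by simp)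
  | succ j hij ih =>
    have hsub : Set.Icc i j ⊆ Set.Icc i (j + 1) := Set.Icc_subset_Icc_right (Nat.le_succ j)
    have hpath := ih (fun k hik hkj => hadj k hik (hkj.trans (Nat.lt_succ_self j))) (hinj.mono hsub)
    refine ((hpath.concat (hadj j hij (Nat.lt_succ_self j))) ?_).mono ?_ (by omega)
    · rintro ⟨k, hk, hkj⟩
      have := hinj (hsub hk) (Set.right_mem_Icc.2 (by omega)) hkj
      exact absurd hk.2 (by omega)
    · exact Set.insert_subset (Set.mem_image_of_mem f (Set.right_mem_Icc.2 (by omega)))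
        (Set.image_mono hsub)

variable {p : G.Walk a b}

theorem hasPathIn_getVert (hp : p.IsPath) {i j : ℕ} (hij : i ≤ j) (hj : j ≤ p.length) :
    HasPathIn G (p.getVert '' Set.Icc i j) (p.getVert i) (p.getVert j) (j - i) :=
  hasPathIn_of_injOn_Icc hij (fun _ _ hk => p.adj_getVert_succ (hk.trans_le hj))
    (hp.getVert_injOn.mono fun _ hk => hk.2.trans hj)

theorem hasPathIn_of_mem_support (hp : p.IsPath) {x y : α} (hx : x ∈ p.support)
    (hy : y ∈ p.support) : HasPathIn G {x | x ∈ p.support} x y 0 := by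
  obtain ⟨i, rfl, hi⟩ := Walk.mem_support_iff_exists_getVert.1 hx
  obtain ⟨j, rfl, hj⟩ := Walk.mem_support_iff_exists_getVert.1 hy
  have hsub (k l : ℕ) : p.getVert '' Set.Icc k l ⊆ {x | x ∈ p.support} :=
    Set.image_subset_iff.2 fun n _ => p.getVert_mem_support n
  obtain hij | hji := le_total i j
  · exact (hasPathIn_getVert hp hij hj).mono (hsub _ _) (Nat.zero_le _)
  · exact (hasPathIn_getVert hp hji hi).symm.mono (hsub _ _) (Nat.zero_le _)

theorem exists_hasPathIn_of_subset_support (hp : p.IsPath) {A : Finset α} (hA : A.Nonempty)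
    (hAp : ∀ x ∈ A, x ∈ p.support) :
    ∃ x ∈ A, HasPathIn G {x | x ∈ p.support} a x (A.card - 1) := by
  classical
  set I := (Finset.range (p.length + 1)).filter fun i => p.getVert i ∈ A
  have hI {x} (hx : x ∈ A) : ∃ i ∈ I, p.getVert i = x := by
    obtain ⟨i, rfl, hi⟩ := Walk.mem_support_iff_exists_getVert.1 (hAp x hx)
    exact ⟨i, by simp [I, hx]; omega, rfl⟩
  obtain ⟨i, hiI, hmax⟩ := I.exists_max_image id <| by
    obtain ⟨x, hx⟩ := hA
    obtain ⟨i, hi, -⟩ := hI hx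
    exact ⟨i, hi⟩
  have hcard : A.card ≤ i + 1 := calc
    A.card ≤ ((Finset.range (i + 1)).image p.getVert).card := Finset.card_le_card fun x hx => by
      obtain ⟨j, hj, rfl⟩ := hI hx
      exact Finset.mem_image_of_mem _ (Finset.mem_range_succ_iff.2 (hmax j hj))
    _ ≤ i + 1 := Finset.card_image_le.trans (by simp)
  rw [Finset.mem_filter, Finset.mem_range_succ_iff] at hiI
  refine ⟨_, hiI.2, ?_⟩
  have h := hasPathIn_getVert hp (Nat.zero_le i) hiI.1
  rw [p.getVert_zero] at h
  exact h.mono (Set.image_subset_iff.2 fun n _ => p.getVert_mem_support n) (by omega)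

end Paths

section CyclicSequences

variable {α : Type*} {G : SimpleGraph α} {n : ℕ} {u : ℕ → α}

/-- A cycle of length `n`, with vertices counting as cycles of length `1` and edges as cycles of
length `2`, encoded as an `n`-periodic sequence of vertices that is injective on each period. -/
structure IsCyclicSeq (G : SimpleGraph α) (n : ℕ) (u : ℕ → α) : Prop where
  pos : 0 < n
  eq_iff : ∀ i j, u i = u j ↔ i ≡ j [MOD n]
  adj : 2 ≤ n → ∀ i, G.Adj (u i) (u (i + 1))

/-- A longest cycle of `G` in the extended sense of `IsCyclicSeq`. -/
structure IsLongestCyclicSeq (G : SimpleGraph α) (n : ℕ) (u : ℕ → α) : Prop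
    extends IsCyclicSeq G n u where
  le : ∀ m v, IsCyclicSeq G m v → m ≤ n

/-- The vertex set of a cyclic sequence of length `n`. -/
def cyclicVerts [DecidableEq α] (n : ℕ) (u : ℕ → α) : Finset α :=
  (Finset.range n).image u

/-- The periodic sequence running through the vertices of a walk of length `n - 1`. -/
def cyclicSeqOfWalk {a b : α} (p : G.Walk a b) (i : ℕ) : α :=
  p.getVert (i % (p.length + 1))

theorem cyclicVerts_cyclicSeqOfWalk [DecidableEq α] {a b : α} (p : G.Walk a b) :
    cyclicVerts (p.length + 1) (cyclicSeqOfWalk p) = p.support.toFinset := by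
  ext x
  simp only [cyclicVerts, cyclicSeqOfWalk, Finset.mem_image, Finset.mem_range, List.mem_toFinset,
    Walk.mem_support_iff_exists_getVert]
  constructor
  · rintro ⟨i, hi, rfl⟩
    exact ⟨i, by rw [Nat.mod_eq_of_lt hi], by omega⟩
  · rintro ⟨i, rfl, hi⟩
    exact ⟨i, by omega, by rw [Nat.mod_eq_of_lt (by omega)]⟩

theorem isCyclicSeq_cyclicSeqOfWalk {a b : α} {p : G.Walk a b} (hp : p.IsPath)
    (hba : 1 ≤ p.length → G.Adj b a) : IsCyclicSeq G (p.length + 1) (cyclicSeqOfWalk p) where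
  pos := Nat.succ_pos _
  eq_iff i j := by
    have hlt (k : ℕ) : k % (p.length + 1) ≤ p.length := Nat.lt_succ_iff.1 (Nat.mod_lt _ (by simp))
    exact ⟨fun h => hp.getVert_injOn (hlt i) (hlt j) h, fun h => congrArg p.getVert h⟩
  adj h2 i := by
    have hlt : i % (p.length + 1) < p.length + 1 := Nat.mod_lt _ (by simp)
    unfold cyclicSeqOfWalk
    obtain hi | hi : i % (p.length + 1) < p.length ∨ i % (p.length + 1) = p.length := by omega
    · rw [Nat.add_mod, Nat.mod_eq_of_lt (show 1 < p.length + 1 by omega),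
        Nat.mod_eq_of_lt (show i % (p.length + 1) + 1 < p.length + 1 by omega)]
      exact p.adj_getVert_succ hi
    · have : (i + 1) % (p.length + 1) = 0 := by
        rw [← Nat.mod_add_mod, hi, Nat.mod_self]
      rw [hi, this, p.getVert_length, p.getVert_zero]
      exact hba (by omega)

theorem IsLongestCyclicSeq.lt_of_hasPathIn (h : IsLongestCyclicSeq G n u) {X : Set α} {a b : α}
    {ℓ : ℕ} (hab : HasPathIn G X a b ℓ) (hba : G.Adj b a) : ℓ < n := by
  obtain ⟨p, hp, hℓ, -⟩ := hab
  have := h.le _ _ (isCyclicSeq_cyclicSeqOfWalk hp fun _ => hba)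
  omega

namespace IsCyclicSeq

variable (h : IsCyclicSeq G n u)
include h

theorem apply_add_self (i : ℕ) : u (i + n) = u i :=
  (h.eq_iff _ _).2 (Nat.add_modEq_right)

theorem injOn_Ico (s : ℕ) : Set.InjOn u (Set.Ico s (s + n)) := by
  intro i hi j hj hij
  simp only [Set.mem_Ico] at hi hj
  exact ((h.eq_iff i j).1 hij).eq_of_abs_lt (by rw [abs_lt]; omega)

theorem hasPathIn {i j : ℕ} (hij : i ≤ j) (hj : j < i + n) :
    HasPathIn G (u '' Set.Icc i j) (u i) (u j) (j - i) :=
  hasPathIn_of_injOn_Icc hij (fun k hik hkj => h.adj (by omega) k)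
    ((h.injOn_Ico i).mono (Set.Icc_subset_Ico_right hj))

variable [DecidableEq α]

theorem cyclicVerts_eq_image_Ico (s : ℕ) :
    cyclicVerts n u = (Finset.Ico s (s + n)).image u := by
  have hmod (i : ℕ) : u (i % n) = u i := (h.eq_iff _ _).2 (Nat.mod_modEq i n)
  have (I : Finset ℕ) : I.image u = (I.image (· % n)).image u := by
    rw [Finset.image_image]
    exact Finset.image_congr fun i _ => (hmod i).symm
  rw [cyclicVerts, this (Finset.Ico s (s + n)), Nat.image_Ico_mod]

theorem apply_mem (i : ℕ) : u i ∈ cyclicVerts n u := by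
  rw [h.cyclicVerts_eq_image_Ico i]
  exact Finset.mem_image_of_mem u (by simpa using h.pos)

theorem card_cyclicVerts : (cyclicVerts n u).card = n := by
  rw [h.cyclicVerts_eq_image_Ico 0,
    Finset.card_image_of_injOn (by simpa only [Finset.coe_Ico] using h.injOn_Ico 0)]
  simp

theorem exists_apply_eq (s : ℕ) {x : α} (hx : x ∈ cyclicVerts n u) :
    ∃ i, s ≤ i ∧ i < s + n ∧ u i = x := by
  rw [h.cyclicVerts_eq_image_Ico s] at hx
  simpa [and_assoc] using hx

end IsCyclicSeq

end CyclicSequences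

section Gaps

/-- A path of length at least `ℓ` from `v` to `w` with no interior vertex in `B`. -/
def HasEar {α : Type*} (G : SimpleGraph α) (B : Finset α) (v w : α) (ℓ : ℕ) : Prop :=
  HasPathIn G {x | x ∈ B → x = v ∨ x = w} v w ℓ

-- The witness is the last index `i ≤ t` with `0 < c i`; a gap between consecutive such indices pays
-- for half of the values at its two ends.
theorem two_mul_sum_Ico_le {c : ℕ → ℕ} {n s : ℕ} (hs : 0 < c s)
    (hc : ∀ i j, i < j → j < i + n → 0 < c i → 0 < c j → c i + c j ≤ 2 * (j - i))
    {t : ℕ} (hst : s ≤ t) (ht : t < s + n) :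
    ∃ i, s ≤ i ∧ i ≤ t ∧ 0 < c i ∧ (∀ k, s ≤ k → k ≤ t → 0 < c k → k ≤ i) ∧
      2 * ∑ k ∈ Finset.Ico s (t + 1), c k ≤ 2 * (i - s) + c s + c i := by
  induction t, hst using Nat.le_induction with
  | base => exact ⟨s, le_rfl, le_rfl, hs, fun k _ hk _ => hk, by simp; omega⟩
  | succ t hst ih =>
    obtain ⟨i, hsi, hit, hi, hlast, hsum⟩ := ih (by omega)
    rw [Finset.sum_Ico_succ_top (by omega)]
    obtain h0 | hpos := Nat.eq_zero_or_pos (c (t + 1))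
    · refine ⟨i, hsi, by omega, hi, fun k hk hkt hck => hlast k hk ?_ hck, by omega⟩
      obtain rfl | hkt := hkt.eq_or_lt <;> omega
    · have := hc i (t + 1) (by omega) (by omega) hi hpos
      exact ⟨t + 1, by omega, le_rfl, hpos, fun k _ hk _ => hk, by omega⟩

theorem sum_Ico_le_of_gaps {c : ℕ → ℕ} {n s m : ℕ} (hs : 0 < c s) (hper : c (s + n) = c s)
    (hc : ∀ i j, i < j → j < i + n → 0 < c i → 0 < c j → c i + c j ≤ 2 * (j - i))
    (hsm : s < m) (hmn : m < s + n) (hm : 0 < c m) : ∑ k ∈ Finset.Ico s (s + n), c k ≤ n := by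
  obtain ⟨i, hsi, hit, hi, hlast, hsum⟩ :=
    two_mul_sum_Ico_le hs hc (show s ≤ s + n - 1 by omega) (by omega)
  have hmi := hlast m (by omega) (by omega) hm
  have := hc i (s + n) (by omega) (by omega) hi (hper ▸ hs)
  rw [Nat.sub_add_cancel (by omega)] at hsum
  omega

namespace IsLongestCyclicSeq

variable {α : Type*} [DecidableEq α] {G : SimpleGraph α} {n : ℕ} {u : ℕ → α}
  (h : IsLongestCyclicSeq G n u)
include h

-- Replacing the arc from `u i` to `u j` by the ear must not lengthen the cycle.
theorem le_sub_of_hasEar {i j ℓ : ℕ} (hij : i < j) (hj : j < i + n)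
    (hear : HasEar G (cyclicVerts n u) (u i) (u j) ℓ) : ℓ ≤ j - i := by
  have harc := h.hasPathIn (show j ≤ i + n - 1 by omega) (by omega)
  have hclosed : G.Adj (u (i + n - 1)) (u i) := by
    have := h.adj (by omega) (i + n - 1)
    rwa [Nat.sub_add_cancel (by omega), h.apply_add_self] at this
  have := h.lt_of_hasPathIn (hear.trans harc ?_) hclosed
  · omega
  · rintro _ hx ⟨k, ⟨hjk, hki⟩, rfl⟩
    refine (hx (h.apply_mem k)).resolve_left fun hki' => ?_
    have := h.injOn_Ico i (by simp; omega) (by simp; omega) hki'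
    omega

theorem sum_le_of_hasEar (ω : α → ℕ)
    (hω : ∀ v ∈ cyclicVerts n u, ∀ w ∈ cyclicVerts n u, v ≠ w → 0 < ω v → 0 < ω w →
      ∃ ℓ, ω v + ω w ≤ 2 * ℓ ∧ HasEar G (cyclicVerts n u) v w ℓ)
    {v w : α} (hv : v ∈ cyclicVerts n u) (hw : w ∈ cyclicVerts n u) (hvw : v ≠ w)
    (hωv : 0 < ω v) (hωw : 0 < ω w) : ∑ x ∈ cyclicVerts n u, ω x ≤ n := by
  obtain ⟨s, -, -, rfl⟩ := h.exists_apply_eq 0 hv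
  obtain ⟨m, hsm, hmn, rfl⟩ := h.exists_apply_eq s hw
  rw [h.cyclicVerts_eq_image_Ico s,
    Finset.sum_image (by simpa only [Finset.coe_Ico] using h.injOn_Ico s)]
  refine sum_Ico_le_of_gaps hωv (congrArg ω (h.apply_add_self s)) (fun i j hij hj hi hj' => ?_)
    (lt_of_le_of_ne hsm fun hsm => hvw (congrArg u hsm)) hmn hωw
  have hne : u i ≠ u j := fun he => hij.ne (h.injOn_Ico i (by simp; omega) (by simp; omega) he)
  obtain ⟨ℓ, hℓ, hear⟩ := hω _ (h.apply_mem i) _ (h.apply_mem j) hne hi hj'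
  have := h.le_sub_of_hasEar hij hj hear
  omega

theorem two_mul_le_of_hasEar {v w : α} {ℓ : ℕ} (hv : v ∈ cyclicVerts n u)
    (hw : w ∈ cyclicVerts n u) (hvw : v ≠ w) (hear : HasEar G (cyclicVerts n u) v w ℓ) :
    2 * ℓ ≤ n := by
  obtain ⟨i, -, -, rfl⟩ := h.exists_apply_eq 0 hv
  obtain ⟨j, hij, hj, rfl⟩ := h.exists_apply_eq i hw
  replace hij : i < j := lt_of_le_of_ne hij fun hij => hvw (congrArg u hij)
  have h₁ := h.le_sub_of_hasEar hij hj hear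
  have h₂ : ℓ ≤ i + n - j := h.le_sub_of_hasEar (by omega) (by omega) <| by
    rw [h.apply_add_self]
    exact hear.symm.mono (fun x hx hxB => (hx hxB).symm) le_rfl
  omega

end IsLongestCyclicSeq

end Gaps

section Spread

variable {α : Type*} [DecidableEq α] {G : SimpleGraph α} {n : ℕ} {u : ℕ → α}

-- Among all arcs leaving `S` and ending in `A \ S`, a longest one covers all of `A`.
theorem IsCyclicSeq.exists_hasPathIn_of_sdiff_nonempty (h : IsCyclicSeq G n u) {S A : Finset α}
    (hSB : S ⊆ cyclicVerts n u) (hAB : A ⊆ cyclicVerts n u) (hS : S.Nonempty)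
    (hAS : (A \ S).Nonempty) :
    ∃ s ∈ S, ∃ a ∈ A \ S, HasPathIn G (cyclicVerts n u) s a (A.card - 1) := by
  classical
  set D := (Finset.range n).filter fun d => ∃ i, u i ∈ S ∧ u (i + d) ∈ A \ S
  have hD {i j : ℕ} (hij : i ≤ j) (hj : j < i + n) (hi : u i ∈ S) (hjA : u j ∈ A \ S) :
      j - i ∈ D := by
    refine Finset.mem_filter.2 ⟨by simp; omega, i, hi, ?_⟩
    rwa [Nat.add_sub_cancel' hij]
  have hDne : D.Nonempty := by
    obtain ⟨s, hs⟩ := hS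
    obtain ⟨a, ha⟩ := hAS
    obtain ⟨i, -, -, rfl⟩ := h.exists_apply_eq 0 (hSB hs)
    obtain ⟨j, hij, hj, rfl⟩ := h.exists_apply_eq i (hAB (Finset.mem_sdiff.1 ha).1)
    exact ⟨j - i, hD hij hj hs ha⟩
  obtain ⟨d, hd, hmax⟩ := D.exists_max_image id hDne
  obtain ⟨hdn, i, hi, hid⟩ := Finset.mem_filter.1 hd
  rw [Finset.mem_range] at hdn
  have hcover : A ⊆ (Finset.Icc i (i + d)).image u := fun x hx => by
    obtain ⟨k, hik, hk, rfl⟩ := h.exists_apply_eq i (hAB hx)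
    refine Finset.mem_image_of_mem u (Finset.mem_Icc.2 ⟨hik, ?_⟩)
    by_contra! hdk
    by_cases hkS : u k ∈ S
    · have := hmax _ (hD (j := i + d + n) (by omega) (by omega) hkS (by rwa [h.apply_add_self]))
      simp only [id] at this
      omega
    · have := hmax _ (hD hik hk hi (Finset.mem_sdiff.2 ⟨hx, hkS⟩))
      simp only [id] at this
      omega
  have hcard : A.card ≤ d + 1 := by
    simpa [Nat.sub_add_comm] using (Finset.card_le_card hcover).trans Finset.card_image_le
  refine ⟨u i, hi, _, hid, (h.hasPathIn (Nat.le_add_right i d) (by omega)).mono ?_ (by omega)⟩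
  rintro _ ⟨k, -, rfl⟩
  exact h.apply_mem k

theorem IsCyclicSeq.exists_hasPathIn_of_nonempty (h : IsCyclicSeq G n u) {A : Finset α} {x : α}
    (hx : x ∈ cyclicVerts n u) (hAB : A ⊆ cyclicVerts n u) (hA : A.Nonempty) :
    ∃ a ∈ A, HasPathIn G (cyclicVerts n u) x a (A.card - 1) := by
  obtain hAx | hAx := (A \ {x}).eq_empty_or_nonempty
  · obtain rfl : A = {x} := hA.subset_singleton_iff.1 (Finset.sdiff_eq_empty_iff_subset.1 hAx)
    exact ⟨x, by simp, .refl hx⟩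
  · obtain ⟨s, hs, a, ha, hpath⟩ := h.exists_hasPathIn_of_sdiff_nonempty
      (Finset.singleton_subset_iff.2 hx) hAB (Finset.singleton_nonempty x) hAx
    exact ⟨a, (Finset.mem_sdiff.1 ha).1, Finset.mem_singleton.1 hs ▸ hpath⟩

end Spread

section Rotations

variable {α : Type*} [DecidableEq α] {G : SimpleGraph α} [DecidableRel G.Adj] {a b : α}

/-- The new ends obtained from a path by Pósa rotation at its last vertex `b`: the successors on
the path of the neighbours of `b`. -/
def rotationEnds (p : G.Walk a b) : Finset α :=
  ((Finset.range p.length).filter fun i => G.Adj b (p.getVert i)).image fun i => p.getVert (i + 1)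

variable {p : G.Walk a b}

theorem mem_rotationEnds {x : α} :
    x ∈ rotationEnds p ↔ ∃ i < p.length, G.Adj b (p.getVert i) ∧ p.getVert (i + 1) = x := by
  simp [rotationEnds, and_assoc]

variable [Fintype α]

theorem card_rotationEnds (hp : p.IsPath) (hN : ∀ x, G.Adj b x → x ∈ p.support) :
    (rotationEnds p).card = G.degree b := by
  have hinj {f : ℕ → ℕ} (hf : f.Injective) (hle : ∀ i < p.length, f i ≤ p.length) :
      Set.InjOn (fun i => p.getVert (f i))
        ((Finset.range p.length).filter fun i => G.Adj b (p.getVert i)) := by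
    intro i hi j hj hij
    simp only [Finset.coe_filter, Finset.mem_range, Set.mem_ofPred_eq] at hi hj
    exact hf (hp.getVert_injOn (hle i hi.1) (hle j hj.1) hij)
  rw [rotationEnds, Finset.card_image_of_injOn (hinj (add_left_injective 1) fun i hi => hi),
    ← Finset.card_image_of_injOn (hinj Function.injective_id fun i hi => hi.le),
    ← G.card_neighborFinset_eq_degree]
  congr 1
  ext x
  simp only [Finset.mem_image, Finset.mem_filter, Finset.mem_range, mem_neighborFinset, id]
  refine ⟨by rintro ⟨i, ⟨-, hi⟩, rfl⟩; exact hi, fun hx => ?_⟩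
  obtain ⟨i, rfl, hi⟩ := Walk.mem_support_iff_exists_getVert.1 (hN x hx)
  refine ⟨i, ⟨hi.lt_of_ne ?_, hx⟩, rfl⟩
  rintro rfl
  exact G.loopless.irrefl b (by rwa [p.getVert_length] at hx)

-- The cycle is closed by the edge from `b` to its earliest neighbour on `p`.
theorem exists_isCyclicSeq_of_neighbors_mem_support (hp : p.IsPath)
    (hN : ∀ x, G.Adj b x → x ∈ p.support) :
    ∃ m u, IsCyclicSeq G m u ∧ G.degree b + 1 ≤ m ∧ rotationEnds p ⊆ cyclicVerts m u := by
  have hex : ∃ i, i = p.length ∨ G.Adj b (p.getVert i) := ⟨_, Or.inl rfl⟩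
  set i := Nat.find hex
  have hclosed : 1 ≤ (p.drop i).length → G.Adj b (p.getVert i) := fun hlen =>
    (Nat.find_spec hex).resolve_left fun hi => by
      rw [Walk.drop_length, show i = p.length from hi] at hlen
      omega
  have hmem {j : ℕ} (hij : i ≤ j) : p.getVert j ∈ (p.drop i).support := by
    rw [← Nat.add_sub_cancel' hij, ← p.drop_getVert]
    exact (p.drop i).getVert_mem_support _
  have hseq := isCyclicSeq_cyclicSeqOfWalk (hp.drop i) hclosed
  refine ⟨_, _, hseq, ?_, ?_⟩
  · rw [← hseq.card_cyclicVerts, cyclicVerts_cyclicSeqOfWalk, ← G.card_neighborFinset_eq_degree,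
      ← Finset.card_insert_of_notMem (G.notMem_neighborFinset_self b)]
    refine Finset.card_le_card (Finset.insert_subset
      (List.mem_toFinset.2 (Walk.end_mem_support _)) fun x hx => ?_)
    rw [mem_neighborFinset] at hx
    obtain ⟨j, rfl, -⟩ := Walk.mem_support_iff_exists_getVert.1 (hN x hx)
    exact List.mem_toFinset.2 (hmem (Nat.find_min' hex (Or.inr hx)))
  · intro x hx
    obtain ⟨j, -, hj, rfl⟩ := mem_rotationEnds.1 hx
    rw [cyclicVerts_cyclicSeqOfWalk, List.mem_toFinset]
    exact hmem ((Nat.find_min' hex (Or.inr hj)).trans (Nat.le_succ j))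

omit [DecidableEq α] in
theorem IsLongestCyclicSeq.minDegree_lt [Nonempty α] {n : ℕ} {u : ℕ → α}
    (h : IsLongestCyclicSeq G n u) : G.minDegree < n := by
  classical
  obtain ⟨a, b, p, hp, hmax⟩ := Walk.exists_isPath_forall_isPath_length_le_length G
  obtain ⟨m, v, hv, hm, -⟩ := exists_isCyclicSeq_of_neighbors_mem_support hp fun x hx => by
    by_contra hxp
    have := hmax _ _ _ (hp.concat hxp hx)
    simp at this
  exact (G.minDegree_le_degree b).trans_lt (hm.trans (h.le m v hv))

end Rotations

section RotatedPaths

variable {α : Type*} {G : SimpleGraph α} {a b x : α} {p : G.Walk a b} {k : ℕ}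

theorem mem_support_take_iff (hk : k ≤ p.length) :
    x ∈ (p.take k).support ↔ ∃ i ≤ k, p.getVert i = x := by
  simp only [Walk.mem_support_iff_exists_getVert, Walk.take_length, Walk.take_getVert]
  constructor
  · rintro ⟨i, rfl, -⟩
    exact ⟨_, Nat.min_le_left _ _, rfl⟩
  · rintro ⟨i, hi, rfl⟩
    exact ⟨i, by rw [min_eq_right hi], by omega⟩

theorem mem_support_drop_iff (hk : k ≤ p.length) :
    x ∈ (p.drop k).support ↔ ∃ i, k ≤ i ∧ i ≤ p.length ∧ p.getVert i = x := by
  simp only [Walk.mem_support_iff_exists_getVert, Walk.drop_length, Walk.drop_getVert]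
  constructor
  · rintro ⟨i, rfl, hi⟩
    exact ⟨_, Nat.le_add_right k i, by omega, rfl⟩
  · rintro ⟨i, hki, hi, rfl⟩
    exact ⟨i - k, by rw [Nat.add_sub_cancel' hki], by omega⟩

theorem notMem_support_drop_of_lt (hp : p.IsPath) {j : ℕ} (hjk : j < k) (hk : k ≤ p.length)
    (hx : x ∈ (p.take j).support) : x ∉ (p.drop k).support := by
  rw [mem_support_drop_iff hk]
  obtain ⟨i, hi, rfl⟩ := (mem_support_take_iff (by omega)).1 hx
  rintro ⟨l, hkl, hl, hli⟩
  have := hp.getVert_injOn hl (show i ≤ p.length by omega) hli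
  omega

theorem exists_isPath_of_mem_rotationEnds [DecidableEq α] [DecidableRel G.Adj] (hp : p.IsPath)
    (hx : x ∈ rotationEnds p) :
    ∃ q : G.Walk a x, q.IsPath ∧ q.length = p.length ∧ ∀ y ∈ q.support, y ∈ p.support := by
  obtain ⟨i, hi, hadj, rfl⟩ := mem_rotationEnds.1 hx
  refine ⟨(p.take i).append (.cons hadj.symm (p.drop (i + 1)).reverse),
    isPath_append (hp.take i) ((hp.drop (i + 1)).reverse.cons ?_) fun y hy hy' => ?_, ?_,
    fun y hy => ?_⟩
  · rw [Walk.support_reverse, List.mem_reverse]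
    exact notMem_support_drop_of_lt hp (Nat.lt_succ_self i) hi (Walk.end_mem_support _)
  · rw [Walk.support_cons, List.mem_cons, Walk.support_reverse, List.mem_reverse] at hy'
    exact hy'.resolve_right (notMem_support_drop_of_lt hp (Nat.lt_succ_self i) hi hy)
  · simp only [Walk.length_append, Walk.length_cons, Walk.length_reverse, Walk.take_length,
      Walk.drop_length]
    omega
  · rw [Walk.mem_support_append_iff, Walk.support_cons, List.mem_cons, Walk.support_reverse,
      List.mem_reverse] at hy
    obtain hy | rfl | hy := hy
    · exact (p.isSubwalk_take i).support_subset hy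
    · exact p.getVert_mem_support i
    · exact (p.isSubwalk_drop (i + 1)).support_subset hy

end RotatedPaths

section PathExtensions

variable {α : Type*} {G : SimpleGraph α} {B : Finset α}

/-- A family of paths of `G`, the *rows*, one starting at each vertex; the rows of the vertices of
`B` are pairwise disjoint. This is Nikoghosyan's HC-extension of a cycle with vertex set `B`. Rows
outside `B` are present only to make `row` total. -/
structure PathExtension (G : SimpleGraph α) (B : Finset α) where
  row : ∀ v, Σ z, G.Walk v z
  isPath : ∀ v, (row v).2.IsPath
  eq_of_mem : ∀ v ∈ B, ∀ w ∈ B, ∀ x ∈ (row v).2.support, x ∈ (row w).2.support → v = w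

namespace PathExtension

/-- The last vertex of the row of `v`. -/
def tip (E : PathExtension G B) (v : α) : α :=
  (E.row v).1

/-- The row of `v`, as a walk. -/
def path (E : PathExtension G B) (v : α) : G.Walk v (E.tip v) :=
  (E.row v).2

/-- The number of vertices of a row of length `ℓ` if the row is nontrivial, and `0` otherwise. -/
def rowWeight (ℓ : ℕ) : ℕ :=
  if ℓ = 0 then 0 else ℓ + 1

/-- The number of vertices on nontrivial rows. -/
def weight (E : PathExtension G B) : ℕ :=
  ∑ v ∈ B, rowWeight (E.path v).length

/-- A path extension with as many vertices as possible on nontrivial rows. -/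
def IsMaximal (E : PathExtension G B) : Prop :=
  ∀ E' : PathExtension G B, E'.weight ≤ E.weight

theorem isPath_path (E : PathExtension G B) (v : α) : (E.path v).IsPath :=
  E.isPath v

theorem eq_of_mem_path (E : PathExtension G B) {v w x : α} (hv : v ∈ B) (hw : w ∈ B)
    (hxv : x ∈ (E.path v).support) (hxw : x ∈ (E.path w).support) : v = w :=
  E.eq_of_mem v hv w hw x hxv hxw

theorem exists_isMaximal [Finite α] (G : SimpleGraph α) (B : Finset α) :
    ∃ E : PathExtension G B, E.IsMaximal := by
  have := Fintype.ofFinite α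
  let triv : PathExtension G B := {
    row := fun v => ⟨v, .nil⟩
    isPath := fun v => .nil
    eq_of_mem := by simp }
  have hbdd : BddAbove (Set.range (weight : PathExtension G B → ℕ)) := by
    refine ⟨B.card * Fintype.card α, ?_⟩
    rintro _ ⟨E, rfl⟩
    refine Finset.sum_le_card_nsmul _ _ _ fun v _ => ?_
    have : (E.path v).length < Fintype.card α := (E.isPath v).length_lt
    unfold rowWeight
    split_ifs <;> omega
  obtain ⟨E, hE⟩ := Nat.sSup_mem (Set.range_nonempty_iff_nonempty.2 ⟨triv⟩) hbdd
  exact ⟨E, fun E' => hE ▸ le_csSup hbdd ⟨E', rfl⟩⟩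

section Replace

variable [DecidableEq α]

/-- Replace the row of `r` by the path `q`. -/
def replace (E : PathExtension G B) {r z : α} (q : G.Walk r z) (hq : q.IsPath)
    (hB : ∀ v ∈ B, v ≠ r → ∀ x ∈ q.support, x ∉ (E.path v).support) : PathExtension G B where
  row := Function.update E.row r ⟨z, q⟩
  isPath v := by
    obtain rfl | hv := eq_or_ne v r
    · rwa [Function.update_self]
    · rw [Function.update_of_ne hv]
      exact E.isPath v
  eq_of_mem v hv w hw x := by
    obtain rfl | hvr := eq_or_ne v r <;> obtain rfl | hwr := eq_or_ne w v
    · simp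
    · rw [Function.update_self, Function.update_of_ne hwr]
      exact fun hxq hxw => absurd hxw (hB w hw hwr x hxq)
    · simp
    · obtain rfl | hwr' := eq_or_ne w r
      · rw [Function.update_self, Function.update_of_ne hvr]
        exact fun hxv hxq => absurd hxv (hB v hv hvr x hxq)
      · rw [Function.update_of_ne hvr, Function.update_of_ne hwr']
        exact E.eq_of_mem v hv w hw x

variable (E : PathExtension G B) {r z : α} (q : G.Walk r z) (hq : q.IsPath)
  (hB : ∀ v ∈ B, v ≠ r → ∀ x ∈ q.support, x ∉ (E.path v).support)

theorem row_replace_self : (E.replace q hq hB).row r = ⟨z, q⟩ :=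
  Function.update_self ..

theorem row_replace_of_ne {v : α} (hv : v ≠ r) : (E.replace q hq hB).row v = E.row v :=
  Function.update_of_ne hv ..

theorem tip_replace_self : (E.replace q hq hB).tip r = z :=
  congrArg Sigma.fst (E.row_replace_self q hq hB)

theorem length_path_replace_self : ((E.replace q hq hB).path r).length = q.length :=
  congrArg (fun ρ : Σ z, G.Walk r z => ρ.2.length) (E.row_replace_self q hq hB)

theorem length_path_replace_of_ne {v : α} (hv : v ≠ r) :
    ((E.replace q hq hB).path v).length = (E.path v).length :=
  congrArg (fun ρ : Σ z, G.Walk v z => ρ.2.length) (E.row_replace_of_ne q hq hB hv)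

theorem support_path_replace_self : ((E.replace q hq hB).path r).support = q.support :=
  congrArg (fun ρ : Σ z, G.Walk r z => ρ.2.support) (E.row_replace_self q hq hB)

theorem support_path_replace_of_ne {v : α} (hv : v ≠ r) :
    ((E.replace q hq hB).path v).support = (E.path v).support :=
  congrArg (fun ρ : Σ z, G.Walk v z => ρ.2.support) (E.row_replace_of_ne q hq hB hv)

theorem weight_replace (hr : r ∈ B) :
    (E.replace q hq hB).weight + rowWeight (E.path r).length =
      E.weight + rowWeight q.length := by
  have hsum : ∑ v ∈ B.erase r, rowWeight ((E.replace q hq hB).path v).length =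
      ∑ v ∈ B.erase r, rowWeight (E.path v).length :=
    Finset.sum_congr rfl fun v hv => by
      rw [E.length_path_replace_of_ne q hq hB (Finset.ne_of_mem_erase hv)]
  rw [weight, weight, ← Finset.add_sum_erase _ _ hr, ← Finset.add_sum_erase _ _ hr, hsum,
    length_path_replace_self]
  omega

end Replace

-- Cut the row of `r` before its `i`-th vertex and hand the second part over to `v`.
theorem exists_weight_reroute (E : PathExtension G B) {r v : α} {i : ℕ} (hr : r ∈ B) (hv : v ∈ B)
    (hvr : v ≠ r) (h0 : 0 < i) (hi : i ≤ (E.path r).length) (hvx : G.Adj v ((E.path r).getVert i)) :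
    ∃ E' : PathExtension G B,
      E'.weight + rowWeight (E.path r).length + rowWeight (E.path v).length =
        E.weight + rowWeight (i - 1) + rowWeight ((E.path r).length - i + 1) := by
  classical
  have hP := E.isPath_path r
  have hvP : v ∉ (E.path r).support := fun h =>
    hvr (E.eq_of_mem_path hv hr (E.path v).start_mem_support h)
  have hq := hP.take (i - 1)
  have hqB : ∀ w ∈ B, w ≠ r → ∀ y ∈ ((E.path r).take (i - 1)).support, y ∉ (E.path w).support :=
    fun w hw hwr y hy hyw =>
      hwr (E.eq_of_mem_path hw hr hyw ((Walk.isSubwalk_take _ _).support_subset hy))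
  have hq' := (hP.drop i).cons (h := hvx) fun h =>
    hvP ((Walk.isSubwalk_drop _ _).support_subset h)
  have hq'B : ∀ w ∈ B, w ≠ v → ∀ y ∈ (Walk.cons hvx ((E.path r).drop i)).support,
      y ∉ ((E.replace _ hq hqB).path w).support := by
    intro w hw hwv y hy
    rw [Walk.support_cons, List.mem_cons] at hy
    obtain rfl | hwr := eq_or_ne w r
    · rw [support_path_replace_self]
      obtain rfl | hy := hy
      · exact fun h => hvP ((Walk.isSubwalk_take _ _).support_subset h)
      · exact fun h => notMem_support_drop_of_lt hP (by omega) hi h hy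
    · rw [E.support_path_replace_of_ne _ hq hqB hwr]
      obtain rfl | hy := hy
      · exact fun h => hwv (E.eq_of_mem_path hw hv h (E.path y).start_mem_support)
      · exact fun h => hwr (E.eq_of_mem_path hw hr h ((Walk.isSubwalk_drop _ _).support_subset hy))
  have h₁ := E.weight_replace _ hq hqB hr
  have h₂ := (E.replace _ hq hqB).weight_replace _ hq' hq'B hv
  rw [length_path_replace_of_ne _ _ _ _ hvr, Walk.length_cons, Walk.drop_length] at h₂
  rw [Walk.take_length, min_eq_left (by omega)] at h₁
  exact ⟨(E.replace _ hq hqB).replace _ hq' hq'B, by omega⟩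

namespace IsMaximal

variable {E : PathExtension G B} (hE : E.IsMaximal) {r v x : α}
include hE

theorem exists_mem_path_of_adj_tip (hr : r ∈ B) (hx : G.Adj (E.tip r) x) :
    ∃ v ∈ B, x ∈ (E.path v).support := by
  classical
  by_contra! hB
  have hq := (E.isPath_path r).concat (hB r hr) hx
  have hqB : ∀ v ∈ B, v ≠ r → ∀ y ∈ ((E.path r).concat hx).support, y ∉ (E.path v).support := by
    intro v hv hvr y hy hyv
    simp only [Walk.support_concat, List.mem_append, List.mem_singleton] at hy
    obtain hy | rfl := hy
    · exact hvr (E.eq_of_mem_path hv hr hyv hy)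
    · exact hB v hv hyv
  have hweight := E.weight_replace _ hq hqB hr
  have hle := hE (E.replace _ hq hqB)
  rw [Walk.length_concat] at hweight
  simp only [rowWeight] at hweight
  split_ifs at hweight <;> omega

-- Otherwise cutting the row of `r` before `x` and moving its second part to `v` would increase
-- the weight.
theorem eq_snd_of_adj (hr : r ∈ B) (hv : v ∈ B) (hvr : v ≠ r) (hlen : (E.path v).length = 0)
    (hvx : G.Adj v x) (hx : x ∈ (E.path r).support) (hxr : x ≠ r) : x = (E.path r).snd := by
  obtain ⟨i, rfl, hi⟩ := Walk.mem_support_iff_exists_getVert.1 hx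
  by_contra hsnd
  have hi2 : 2 ≤ i := by
    obtain _ | _ | i := i
    · exact absurd (E.path r).getVert_zero hxr
    · exact absurd rfl hsnd
    · omega
  obtain ⟨E', hE'⟩ := E.exists_weight_reroute hr hv hvr (by omega) hi hvx
  have := hE E'
  rw [hlen] at hE'
  simp only [rowWeight] at hE'
  split_ifs at hE' <;> omega

theorem exists_tip_eq_of_mem_rotationEnds [DecidableEq α] [DecidableRel G.Adj] (hr : r ∈ B)
    (hx : x ∈ rotationEnds (E.path r)) :
    ∃ E' : PathExtension G B, E'.IsMaximal ∧ E'.tip r = x ∧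
      (E'.path r).length = (E.path r).length := by
  obtain ⟨q, hq, hlen, hqP⟩ := exists_isPath_of_mem_rotationEnds (E.isPath_path r) hx
  have hqB : ∀ v ∈ B, v ≠ r → ∀ y ∈ q.support, y ∉ (E.path v).support :=
    fun v hv hvr y hy hyv => hvr (E.eq_of_mem_path hv hr hyv (hqP y hy))
  have hweight := E.weight_replace q hq hqB hr
  rw [hlen, Nat.add_right_cancel_iff] at hweight
  exact ⟨E.replace q hq hqB, fun E' => (hE E').trans_eq hweight.symm, E.tip_replace_self q hq hqB,
    (E.length_path_replace_self q hq hqB).trans hlen⟩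

end IsMaximal

end PathExtension

end PathExtensions

section TipDegrees

variable {α : Type*} {G : SimpleGraph α}

theorem start_notMem_support_tail {a b : α} {p : G.Walk a b} (hp : p.IsPath)
    (hlen : 0 < p.length) : a ∉ p.tail.support := by
  have hnil : ¬p.Nil := Walk.not_nil_iff_lt_length.2 hlen
  rw [← p.cons_tail_eq hnil, Walk.cons_isPath_iff] at hp
  exact hp.2

theorem mem_support_iff_mem_support_tail {a b x : α} {p : G.Walk a b} (hlen : 0 < p.length) :
    x ∈ p.support ↔ x = a ∨ x ∈ p.tail.support := by
  rw [← Walk.cons_support_tail (Walk.not_nil_iff_lt_length.2 hlen), List.mem_cons]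

namespace PathExtension

variable {B : Finset α} {E : PathExtension G B} {r v w x : α}

theorem eq_of_mem_path_of_mem (E : PathExtension G B) (hv : v ∈ B) (hxB : x ∈ B)
    (hx : x ∈ (E.path v).support) : x = v :=
  E.eq_of_mem_path hxB hv (E.path x).start_mem_support hx

theorem notMem_path_of_ne (hr : r ∈ B) (hv : v ∈ B) (hvr : v ≠ r) (hx : x ∈ (E.path v).support) :
    x ∉ (E.path r).support :=
  fun h => hvr (E.eq_of_mem_path hv hr hx h)

theorem eq_of_mem_path_of_length_eq_zero (hv : (E.path v).length = 0)
    (hx : x ∈ (E.path v).support) : x = v := by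
  obtain ⟨i, rfl, hi⟩ := Walk.mem_support_iff_exists_getVert.1 hx
  obtain rfl : i = 0 := by omega
  exact Walk.getVert_zero _

variable [DecidableRel G.Adj]

/-- The vertices of `B` with trivial row that are adjacent to the second vertex of the nontrivial
row of `r`. -/
def satellites (E : PathExtension G B) (r : α) : Finset α :=
  B.filter fun v => 0 < (E.path r).length ∧ (E.path v).length = 0 ∧ G.Adj v (E.path r).snd

theorem mem_satellites : v ∈ E.satellites r ↔
    v ∈ B ∧ 0 < (E.path r).length ∧ (E.path v).length = 0 ∧ G.Adj v (E.path r).snd :=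
  Finset.mem_filter

theorem ne_of_mem_satellites (hv : v ∈ E.satellites r) : v ≠ r := by
  rintro rfl
  obtain ⟨-, hpos, hzero, -⟩ := mem_satellites.1 hv
  omega

variable [Fintype α]

/-- The row of `r` is nontrivial, its tip has all its neighbours on it, and it has fewer
satellites than its tip has neighbours. The ends obtained by rotating such a row can be
distributed among `r` and its satellites. -/
def IsClosed (E : PathExtension G B) (r : α) : Prop :=
  (∀ x, G.Adj (E.tip r) x → x ∈ (E.path r).support) ∧
    (E.satellites r).card < G.degree (E.tip r)

/-- The satellites of `r`, provided that the row of `r` is not closed. -/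
noncomputable def openSatellites (E : PathExtension G B) (r : α) : Finset α :=
  open scoped Classical in if E.IsClosed r then ∅ else E.satellites r

theorem mem_openSatellites : v ∈ E.openSatellites r ↔ ¬E.IsClosed r ∧ v ∈ E.satellites r := by
  unfold openSatellites
  split_ifs with h <;> simp [h]

variable [DecidableEq α]

/-- The neighbours of the tip of the row of `r` on the row of `v`. -/
def tipNeighbors (E : PathExtension G B) (r v : α) : Finset α :=
  (G.neighborFinset (E.tip r)).filter (· ∈ (E.path v).support)

theorem mem_tipNeighbors :
    x ∈ E.tipNeighbors r v ↔ G.Adj (E.tip r) x ∧ x ∈ (E.path v).support := by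
  rw [tipNeighbors, Finset.mem_filter, mem_neighborFinset]

theorem hasPathIn_tip (hr : r ∈ B) (hv : v ∈ B) (hvr : v ≠ r)
    (hne : (E.tipNeighbors r v).Nonempty) :
    HasPathIn G (insert (E.tip r) {x | x ∈ (E.path v).support}) v (E.tip r)
      (E.tipNeighbors r v).card := by
  obtain ⟨y, hy, hpath⟩ := exists_hasPathIn_of_subset_support (E.isPath_path v) hne
    fun x hx => (mem_tipNeighbors.1 hx).2
  refine (hpath.concat (mem_tipNeighbors.1 hy).1.symm fun h => ?_).mono subset_rfl (by omega)
  exact notMem_path_of_ne hr hv hvr h (E.path r).end_mem_support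

/-- A lower bound for the length of a path from `v` to the row of `r` that uses only the row of
`v`. -/
def legLength (E : PathExtension G B) (r v : α) : ℕ :=
  if v = r ∨ v ∈ E.satellites r then 1 else (E.tipNeighbors r v).card

theorem exists_leg (hr : r ∈ B) (hlen : 0 < (E.path r).length) (hv : v ∈ B)
    (hpos : 0 < E.legLength r v) :
    ∃ y ∈ (E.path r).tail.support,
      HasPathIn G (insert y {x | x ∈ (E.path v).support ∧ x ∉ (E.path r).tail.support}) v y
        (E.legLength r v) := by
  have htail {x} (hx : x ∈ (E.path r).tail.support) : x ∈ (E.path r).support :=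
    (mem_support_iff_mem_support_tail hlen).2 (Or.inr hx)
  have hsnd : (E.path r).snd ∈ (E.path r).tail.support := (E.path r).tail.start_mem_support
  unfold legLength at hpos ⊢
  split_ifs at hpos ⊢ with h
  · have hadj : G.Adj v (E.path r).snd := by
      obtain rfl | h := h
      · exact (E.path v).adj_snd (Walk.not_nil_iff_lt_length.2 hlen)
      · exact (mem_satellites.1 h).2.2.2
    have hvtail : v ∉ (E.path r).tail.support := by
      obtain rfl | h := h
      · exact start_notMem_support_tail (E.isPath_path v) hlen
      · exact fun hmem => notMem_path_of_ne hr hv (ne_of_mem_satellites h)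
          (E.path v).start_mem_support (htail hmem)
    refine ⟨_, hsnd, (HasPathIn.of_adj hadj).mono ?_ le_rfl⟩
    rintro x (rfl | rfl)
    · exact Or.inr ⟨(E.path x).start_mem_support, hvtail⟩
    · exact Or.inl rfl
  · push Not at h
    refine ⟨_, (E.path r).tail.end_mem_support,
      (hasPathIn_tip hr hv h.1 (Finset.card_pos.1 hpos)).mono ?_ le_rfl⟩
    exact Set.insert_subset_insert fun x hx =>
      ⟨hx, fun hmem => notMem_path_of_ne hr hv h.1 hx (htail hmem)⟩

theorem hasEar_of_legLength_pos (hr : r ∈ B) (hlen : 0 < (E.path r).length) (hv : v ∈ B)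
    (hw : w ∈ B) (hvw : v ≠ w) (hvpos : 0 < E.legLength r v) (hwpos : 0 < E.legLength r w) :
    HasEar G B v w (E.legLength r v + E.legLength r w) := by
  obtain ⟨y, hy, hvy⟩ := exists_leg hr hlen hv hvpos
  obtain ⟨y', hy', hwy'⟩ := exists_leg hr hlen hw hwpos
  have hyy' := hasPathIn_of_mem_support (E.isPath_path r).tail hy hy'
  refine ((hvy.trans hyy' ?_).trans hwy'.symm ?_).mono ?_ (by omega)
  · rintro x (rfl | hx) hx'
    · rfl
    · exact absurd hx' hx.2
  · rintro x ((rfl | hx) | hx) (rfl | hx')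
    · rfl
    · exact absurd hy hx'.2
    · exact absurd hy' hx.2
    · exact absurd (E.eq_of_mem_path hv hw hx.1 hx'.1) hvw
    · rfl
    · exact absurd hx hx'.2
  · have htailB {x} (hx : x ∈ (E.path r).tail.support) (hxB : x ∈ B) : False := by
      obtain rfl := E.eq_of_mem_path_of_mem hr hxB
        ((mem_support_iff_mem_support_tail hlen).2 (Or.inr hx))
      exact start_notMem_support_tail (E.isPath_path x) hlen hx
    rintro x (((rfl | hx) | hx) | (rfl | hx)) hxB
    · exact (htailB hy hxB).elim
    · exact Or.inl (E.eq_of_mem_path_of_mem hv hxB hx.1)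
    · exact (htailB hx hxB).elim
    · exact (htailB hy' hxB).elim
    · exact Or.inr (E.eq_of_mem_path_of_mem hw hxB hx.1)

theorem card_tipNeighbors_self_le (r : α) : (E.tipNeighbors r r).card ≤ (E.path r).length := by
  have hsub : E.tipNeighbors r r ⊆ (E.path r).support.toFinset.erase (E.tip r) := fun x hx => by
    obtain ⟨hadj, hx⟩ := mem_tipNeighbors.1 hx
    exact Finset.mem_erase.2 ⟨hadj.ne', List.mem_toFinset.2 hx⟩
  have := Finset.card_le_card hsub
  rwa [Finset.card_erase_of_mem (List.mem_toFinset.2 (E.path r).end_mem_support),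
    List.toFinset_card_of_nodup (E.isPath_path r).support_nodup, Walk.length_support,
    Nat.add_sub_cancel] at this

theorem card_satellites_lt_sum_legLength (hr : r ∈ B) :
    (E.satellites r).card < ∑ v ∈ B, E.legLength r v := by
  have hr' : r ∉ E.satellites r := fun h => ne_of_mem_satellites h rfl
  rw [Nat.lt_iff_add_one_le, ← Finset.card_insert_of_notMem hr', Finset.card_eq_sum_ones]
  refine (Finset.sum_le_sum fun v hv => ?_).trans (Finset.sum_le_sum_of_subset
    (Finset.insert_subset hr (Finset.filter_subset _ _)))
  rw [legLength, if_pos (Finset.mem_insert.1 hv)]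

theorem IsMaximal.degree_tip_le_sum (hE : E.IsMaximal) (hr : r ∈ B) :
    G.degree (E.tip r) ≤ ∑ v ∈ B, (E.tipNeighbors r v).card := by
  rw [← G.card_neighborFinset_eq_degree]
  refine (Finset.card_le_card fun x hx => ?_).trans Finset.card_biUnion_le
  rw [mem_neighborFinset] at hx
  obtain ⟨v, hv, hxv⟩ := hE.exists_mem_path_of_adj_tip hr hx
  exact Finset.mem_biUnion.2 ⟨v, hv, mem_tipNeighbors.2 ⟨hx, hxv⟩⟩

theorem IsMaximal.degree_tip_add_card_satellites_lt (hE : E.IsMaximal) (hr : r ∈ B) :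
    G.degree (E.tip r) + (E.satellites r).card <
      ∑ v ∈ B, E.legLength r v + (E.path r).length +
        ∑ v ∈ E.satellites r, (E.tipNeighbors r v).card := by
  have hsat : E.satellites r ⊆ B := Finset.filter_subset _ _
  have hpoint : ∀ v ∈ B,
      (E.tipNeighbors r v).card + (if v = r then 1 else 0) + (if v ∈ E.satellites r then 1 else 0) ≤
        E.legLength r v + (if v = r then (E.path r).length else 0) +
          (if v ∈ E.satellites r then (E.tipNeighbors r v).card else 0) := by
    intro v _
    have := E.card_tipNeighbors_self_le r
    obtain rfl | hvr := eq_or_ne v r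
    · have : v ∉ E.satellites v := fun h => ne_of_mem_satellites h rfl
      simp only [legLength, if_true, true_or, if_neg this]
      omega
    · simp only [legLength, hvr, if_false, false_or]
      split_ifs <;> omega
  have := Finset.sum_le_sum hpoint
  simp only [Finset.sum_add_distrib, Finset.sum_ite_eq', if_pos hr, Finset.sum_ite_mem,
    Finset.inter_eq_right.2 hsat, ← Finset.card_eq_sum_ones] at this
  have := hE.degree_tip_le_sum hr
  omega

-- A satellite adjacent to the tip is adjacent to the second vertex of the row, so by
-- `eq_snd_of_adj` the tip is that second vertex.
theorem IsMaximal.length_eq_one_of_mem_satellites (hE : E.IsMaximal) (hr : r ∈ B)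
    (hv : v ∈ E.satellites r) (hne : (E.tipNeighbors r v).Nonempty) :
    (E.path r).length = 1 := by
  obtain ⟨hvB, hpos, hzero, -⟩ := mem_satellites.1 hv
  obtain ⟨x, hx⟩ := hne
  obtain ⟨hadj, hxv⟩ := mem_tipNeighbors.1 hx
  obtain rfl := eq_of_mem_path_of_length_eq_zero hzero hxv
  have hP := E.isPath_path r
  have htip : E.tip r ≠ r :=
    ne_of_mem_of_not_mem (E.path r).tail.end_mem_support (start_notMem_support_tail hP hpos)
  have := hE.eq_snd_of_adj hr hvB (ne_of_mem_satellites hv) hzero hadj.symm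
    (E.path r).end_mem_support htip
  refine hP.getVert_injOn (le_refl (E.path r).length) (show 1 ≤ _ from hpos) ?_
  rw [Walk.getVert_length]
  exact this

theorem card_tipNeighbors_le_one_of_length_eq_zero (hv : (E.path v).length = 0) :
    (E.tipNeighbors r v).card ≤ 1 := by
  have hsub : E.tipNeighbors r v ⊆ (E.path v).support.toFinset := fun x hx =>
    List.mem_toFinset.2 (mem_tipNeighbors.1 hx).2
  refine (Finset.card_le_card hsub).trans ((List.toFinset_card_le _).trans ?_)
  rw [Walk.length_support, hv]

theorem IsMaximal.length_add_sum_satellites_le (hE : E.IsMaximal) (hr : r ∈ B) :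
    (E.path r).length + ∑ v ∈ E.satellites r, (E.tipNeighbors r v).card ≤
      max (E.path r).length ((E.satellites r).card + 1) := by
  by_cases h : ∃ v ∈ E.satellites r, (E.tipNeighbors r v).Nonempty
  · obtain ⟨v, hv, hne⟩ := h
    have := hE.length_eq_one_of_mem_satellites hr hv hne
    have := Finset.sum_le_card_nsmul (E.satellites r) _ 1 fun v hv =>
      card_tipNeighbors_le_one_of_length_eq_zero (r := r) (mem_satellites.1 hv).2.2.1
    simp only [smul_eq_mul, mul_one] at this
    omega
  · push Not at h
    rw [Finset.sum_eq_zero fun v hv => by rw [h v hv, Finset.card_empty]]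
    exact le_max_left _ _

section Longest

variable {n : ℕ} {u : ℕ → α}

theorem two_mul_sum_legLength_le {E : PathExtension G (cyclicVerts n u)}
    (h : IsLongestCyclicSeq G n u) (hr : r ∈ cyclicVerts n u) (hlen : 0 < (E.path r).length)
    (hv : v ∈ cyclicVerts n u) (hvr : v ≠ r) (hpos : 0 < E.legLength r v) :
    2 * ∑ v ∈ cyclicVerts n u, E.legLength r v ≤ n := by
  rw [Finset.mul_sum]
  refine h.sum_le_of_hasEar _ (fun v hv w hw hvw hvpos hwpos => ?_) hv hr hvr (by omega) ?_
  · exact ⟨_, (mul_add 2 _ _).ge, hasEar_of_legLength_pos hr hlen hv hw hvw (by omega) (by omega)⟩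
  · rw [legLength, if_pos (Or.inl rfl)]
    exact Nat.two_pos

theorem two_mul_length_lt {E : PathExtension G (cyclicVerts n u)}
    (h : IsLongestCyclicSeq G n u) (hr : r ∈ cyclicVerts n u)
    (hv : v ∈ cyclicVerts n u) (hvr : v ≠ r) (hne : (E.tipNeighbors r v).Nonempty) :
    2 * (E.path r).length < n := by
  have hpath := (HasPathIn.of_isPath (E.isPath_path r)).trans
    (hasPathIn_tip hr hv hvr hne).symm <| by
      rintro x hx (rfl | hx')
      · rfl
      · exact absurd hx (notMem_path_of_ne hr hv hvr hx')
  have := h.two_mul_le_of_hasEar hr hv hvr.symm <| hpath.mono (m := (E.path r).length + 1)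
    (by
      rintro x (hx | rfl | hx) hxB
      · exact Or.inl (E.eq_of_mem_path_of_mem hr hxB hx)
      · exact Or.inl (E.eq_of_mem_path_of_mem hr hxB (E.path r).end_mem_support)
      · exact Or.inr (E.eq_of_mem_path_of_mem hv hxB hx))
    (Nat.add_le_add_left (Finset.card_pos.2 hne) _)
  omega

theorem IsMaximal.degree_tip_add_card_satellites_lt_or_isClosed
    {E : PathExtension G (cyclicVerts n u)} (hE : E.IsMaximal) (h : IsLongestCyclicSeq G n u)
    (hr : r ∈ cyclicVerts n u) (hlen : 0 < (E.path r).length) :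
    G.degree (E.tip r) + (E.satellites r).card < n ∨ E.IsClosed r := by
  have hsat : E.satellites r ⊆ cyclicVerts n u := Finset.filter_subset _ _
  have hlt := E.card_satellites_lt_sum_legLength hr
  by_cases hout : ∃ v ∈ cyclicVerts n u, v ≠ r ∧ (E.tipNeighbors r v).Nonempty
  · obtain ⟨v, hv, hvr, hne⟩ := hout
    have hpos : 0 < E.legLength r v := by
      unfold legLength
      split_ifs
      exacts [Nat.one_pos, Finset.card_pos.2 hne]
    have := two_mul_sum_legLength_le h hr hlen hv hvr hpos
    have := two_mul_length_lt h hr hv hvr hne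
    have := hE.degree_tip_add_card_satellites_lt hr
    have := hE.length_add_sum_satellites_le hr
    omega
  push Not at hout
  by_cases hdeg : (E.satellites r).card < G.degree (E.tip r)
  · refine Or.inr ⟨fun x hx => ?_, hdeg⟩
    obtain ⟨v, hv, hxv⟩ := hE.exists_mem_path_of_adj_tip hr hx
    obtain rfl | hvr := eq_or_ne v r
    · exact hxv
    · exact absurd (mem_tipNeighbors.2 ⟨hx, hxv⟩) (by simp [hout v hv hvr])
  · have hdeg_pos : 0 < G.degree (E.tip r) := (G.degree_pos_iff_exists_adj _).2
      ⟨_, ((E.path r).adj_penultimate (Walk.not_nil_iff_lt_length.2 hlen)).symm⟩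
    obtain ⟨v, hv⟩ := Finset.card_pos.1 (show 0 < (E.satellites r).card by omega)
    have := two_mul_sum_legLength_le h hr hlen (hsat hv) (ne_of_mem_satellites hv)
      (by rw [legLength, if_pos (Or.inr hv)]; exact Nat.one_pos)
    omega

theorem IsMaximal.degree_tip_lt {E : PathExtension G (cyclicVerts n u)} (hE : E.IsMaximal)
    (h : IsLongestCyclicSeq G n u) (hr : r ∈ cyclicVerts n u) (hlen : 0 < (E.path r).length) :
    G.degree (E.tip r) < n := by
  obtain hlt | hclosed := hE.degree_tip_add_card_satellites_lt_or_isClosed h hr hlen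
  · omega
  · obtain ⟨m, w, hw, hm, -⟩ :=
      exists_isCyclicSeq_of_neighbors_mem_support (E.isPath_path r) hclosed.1
    exact hm.trans (h.le m w hw)

theorem IsMaximal.degree_lt_of_mem_rotationEnds {E : PathExtension G (cyclicVerts n u)}
    (hE : E.IsMaximal) (h : IsLongestCyclicSeq G n u) (hr : r ∈ cyclicVerts n u)
    (hx : x ∈ rotationEnds (E.path r)) : G.degree x < n := by
  obtain ⟨E', hE', rfl, hlen⟩ := hE.exists_tip_eq_of_mem_rotationEnds hr hx
  obtain ⟨i, hi, -⟩ := mem_rotationEnds.1 hx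
  exact hE'.degree_tip_lt h hr (by omega)

end Longest

end PathExtension

end TipDegrees

section SpreadFamilies

/-- From every member of the family `f` one can reach some member of each nonempty subfamily by a
path in `X` long enough to contain the whole subfamily. A family enumerating the vertices of a cycle
has this property. -/
def IsSpread {α ι : Type*} (G : SimpleGraph α) (X : Set α) (I : Finset ι) (f : ι → α) : Prop :=
  ∀ b ∈ I, ∀ A ⊆ I, A.Nonempty → ∃ a ∈ A, HasPathIn G X (f b) (f a) (A.card - 1)

variable {α : Type*} [DecidableEq α] {G : SimpleGraph α} [DecidableRel G.Adj]

namespace PathExtension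

variable {B : Finset α} {E : PathExtension G B} {g f : α → α} {r v : α}

theorem hasPathIn_of_mem_rotationEnds (hr : r ∈ B) (hv : v ∈ insert r (E.satellites r)) {x : α}
    (hx : x ∈ rotationEnds (E.path r)) :
    HasPathIn G (insert v {y | y ∈ (E.path r).support ∧ y ≠ r}) x v 0 := by
  obtain ⟨i, hi, -, rfl⟩ := mem_rotationEnds.1 hx
  have hlen : 0 < (E.path r).length := by omega
  have hstart := start_notMem_support_tail (E.isPath_path r) hlen
  have hadj : G.Adj (E.path r).snd v := by
    obtain rfl | hv := Finset.mem_insert.1 hv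
    · exact ((E.path v).adj_snd (Walk.not_nil_iff_lt_length.2 hlen)).symm
    · exact (mem_satellites.1 hv).2.2.2.symm
  have htail {y} (hy : y ∈ (E.path r).tail.support) : y ∈ (E.path r).support :=
    (mem_support_iff_mem_support_tail hlen).2 (Or.inr hy)
  have hvtail : v ∉ (E.path r).tail.support := by
    obtain rfl | hv := Finset.mem_insert.1 hv
    · exact hstart
    · exact fun h => notMem_path_of_ne hr (mem_satellites.1 hv).1 (ne_of_mem_satellites hv)
        (E.path v).start_mem_support (htail h)
  have hmem : (E.path r).getVert (i + 1) ∈ (E.path r).tail.support := by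
    rw [← Walk.getVert_tail]
    exact Walk.getVert_mem_support _ _
  refine ((hasPathIn_of_mem_support (E.isPath_path r).tail hmem
    (E.path r).tail.start_mem_support).concat hadj hvtail).mono ?_ (Nat.zero_le _)
  exact Set.insert_subset_insert fun y hy => ⟨htail hy, ne_of_mem_of_not_mem hy hstart⟩

variable [Fintype α]

/-- An assignment of an end `f v` of a rotated row to each `v` in `B`. The tips of closed rows are
rotated: `g v` is the vertex whose row is used for `v`, and all vertices sharing a closed row get
different ends. -/
structure IsAssignment (E : PathExtension G B) (g f : α → α) : Prop where
  mem : ∀ v ∈ B, g v ∈ B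
  mem_insert : ∀ v ∈ B, E.IsClosed (g v) → v ∈ insert (g v) (E.satellites (g v))
  mem_rotationEnds : ∀ v ∈ B, E.IsClosed (g v) → f v ∈ rotationEnds (E.path (g v))
  injOn : ∀ r, E.IsClosed r → Set.InjOn f {v | v ∈ B ∧ g v = r}
  eq_self : ∀ v ∈ B, ¬E.IsClosed (g v) → g v = v
  eq_tip : ∀ v ∈ B, ¬E.IsClosed (g v) → f v = E.tip v
  notMem_satellites : ∀ v ∈ B, ¬E.IsClosed (g v) → ∀ r ∈ B, E.IsClosed r → v ∉ E.satellites r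

theorem exists_injOn_rotationEnds (hr : E.IsClosed r) :
    ∃ φ : α → α, (∀ v ∈ insert r (E.satellites r), φ v ∈ rotationEnds (E.path r)) ∧
      Set.InjOn φ (insert r (E.satellites r) : Finset α) := by
  have : Nonempty α := ⟨r⟩
  refine Set.Finite.exists_injOn_of_encard_le (t := (rotationEnds (E.path r) : Set α))
    (Finset.finite_toSet _) ?_
  rw [Set.encard_coe_eq_coe_finsetCard, Set.encard_coe_eq_coe_finsetCard, Nat.cast_le,
    card_rotationEnds (E.isPath_path r) hr.1]
  exact (Finset.card_insert_le _ _).trans hr.2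

theorem exists_isAssignment (E : PathExtension G B) : ∃ g f, E.IsAssignment g f := by
  classical
  have hhost : ∀ v ∈ B, ∃ r ∈ B,
      (E.IsClosed r → v ∈ insert r (E.satellites r)) ∧
      (¬E.IsClosed r → r = v ∧ ∀ s ∈ B, E.IsClosed s → v ∉ E.satellites s) := by
    intro v hv
    by_cases h : ∃ r ∈ B, E.IsClosed r ∧ v ∈ insert r (E.satellites r)
    · obtain ⟨r, hr, hclosed, hvr⟩ := h
      exact ⟨r, hr, fun _ => hvr, fun h => absurd hclosed h⟩
    · push Not at h
      exact ⟨v, hv, fun _ => Finset.mem_insert_self _ _,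
        fun _ => ⟨rfl, fun s hs hclosed hvs => h s hs hclosed (Finset.mem_insert_of_mem hvs)⟩⟩
  have hends (r : α) : ∃ φ : α → α, E.IsClosed r →
      (∀ v ∈ insert r (E.satellites r), φ v ∈ rotationEnds (E.path r)) ∧
        Set.InjOn φ (insert r (E.satellites r) : Finset α) := by
    by_cases hr : E.IsClosed r
    · exact (exists_injOn_rotationEnds hr).imp fun _ h _ => h
    · exact ⟨id, fun h => absurd h hr⟩
  choose! g hgB hclosed hopen using hhost
  choose φ hφ using hends
  refine ⟨g, fun v => if E.IsClosed (g v) then φ (g v) v else E.tip v, hgB, hclosed,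
    fun v hv h => ?_, fun r hr v hv w hw hvw => ?_, fun v hv h => (hopen v hv h).1,
    fun _ _ h => if_neg h, fun v hv h => (hopen v hv h).2⟩
  · simpa only [if_pos h] using (hφ _ h).1 v (hclosed v hv h)
  · obtain ⟨hvB, rfl⟩ := hv
    simp only [hw.2, if_pos hr] at hvw
    exact (hφ _ hr).2 (hclosed v hvB hr) (hw.2 ▸ hclosed w hw.1 (hw.2.symm ▸ hr)) hvw

namespace IsAssignment

variable (hfg : E.IsAssignment g f)
include hfg

theorem hasPathIn {b s : α} (hb : b ∈ B) (hs : s ∈ B) (hbs : g b = g s) :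
    HasPathIn G (insert s {y | y ∈ (E.path (g s)).support ∧ y ≠ g s}) (f b) s 0 := by
  by_cases hclosed : E.IsClosed (g s)
  · exact hasPathIn_of_mem_rotationEnds (hfg.mem s hs) (hfg.mem_insert s hs hclosed)
      (hbs ▸ hfg.mem_rotationEnds b hb (hbs.symm ▸ hclosed))
  · have hs' := hfg.eq_self s hs hclosed
    obtain rfl : b = s :=
      (hfg.eq_self b hb (hbs.symm ▸ hclosed)).symm.trans (hbs.trans hs')
    rw [hfg.eq_tip b hb hclosed, hs']
    refine (HasPathIn.of_isPath (E.isPath_path b)).symm.mono (fun y hy => ?_) (Nat.zero_le _)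
    exact (eq_or_ne y b).imp id fun h => ⟨hy, h⟩

theorem exists_hasPathIn_of_forall_eq {b : α} {A : Finset α} (hb : b ∈ B) (hA : A.Nonempty)
    (hfib : ∀ a ∈ A, a ∈ B ∧ g a = g b) :
    ∃ a ∈ A, HasPathIn G Set.univ (f b) (f a) (A.card - 1) := by
  by_cases hclosed : E.IsClosed (g b)
  · obtain ⟨m, w, hw, -, hends⟩ :=
      exists_isCyclicSeq_of_neighbors_mem_support (E.isPath_path (g b)) hclosed.1
    have hmem {a : α} (haB : a ∈ B) (hab : g a = g b) : f a ∈ cyclicVerts m w :=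
      hends (hab ▸ hfg.mem_rotationEnds a haB (hab.symm ▸ hclosed))
    have hcard : (A.image f).card = A.card :=
      Finset.card_image_of_injOn ((hfg.injOn _ hclosed).mono hfib)
    obtain ⟨x, hx, hpath⟩ := hw.exists_hasPathIn_of_nonempty (hmem hb rfl)
      (Finset.image_subset_iff.2 fun a ha => hmem (hfib a ha).1 (hfib a ha).2) (hA.image f)
    obtain ⟨a, ha, rfl⟩ := Finset.mem_image.1 hx
    exact ⟨a, ha, hpath.mono (Set.subset_univ _) (by rw [hcard])⟩
  · have hAb : ∀ a ∈ A, a = b := fun a ha => by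
      rw [← hfg.eq_self b hb hclosed, ← (hfib a ha).2,
        hfg.eq_self a (hfib a ha).1 ((hfib a ha).2.symm ▸ hclosed)]
    obtain rfl : A = {b} := Finset.eq_singleton_iff_nonempty_unique_mem.2 ⟨hA, hAb⟩
    exact ⟨b, Finset.mem_singleton_self b, .refl (Set.mem_univ _)⟩

end IsAssignment

section Longest

variable {n : ℕ} {u : ℕ → α} {E : PathExtension G (cyclicVerts n u)}

theorem IsAssignment.isSpread (hfg : E.IsAssignment g f) (h : IsCyclicSeq G n u) :
    IsSpread G Set.univ (cyclicVerts n u) f := by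
  classical
  intro b hb A hAB hA
  set F := (cyclicVerts n u).filter fun v => g v = g b
  obtain hAF | hAF := (A \ F).eq_empty_or_nonempty
  · have hfib : ∀ a ∈ A, a ∈ cyclicVerts n u ∧ g a = g b := fun a ha =>
      Finset.mem_filter.1 (Finset.sdiff_eq_empty_iff_subset.1 hAF ha)
    exact hfg.exists_hasPathIn_of_forall_eq hb hA hfib
  · obtain ⟨s, hs, a, ha, harc⟩ := h.exists_hasPathIn_of_sdiff_nonempty
      (S := F) (Finset.filter_subset _ _) hAB ⟨b, Finset.mem_filter.2 ⟨hb, rfl⟩⟩ hAF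
    obtain ⟨hsB, hsb⟩ := Finset.mem_filter.1 hs
    obtain ⟨haA, haF⟩ := Finset.mem_sdiff.1 ha
    have haB := hAB haA
    have hgas : g a ≠ g s := fun h => haF (Finset.mem_filter.2 ⟨haB, h.trans hsb⟩)
    have hmeet {v x : α} (hv : v ∈ cyclicVerts n u) (hx : x ∈ cyclicVerts n u)
        (hxv : x ∈ insert v {y | y ∈ (E.path (g v)).support ∧ y ≠ g v}) : x = v :=
      hxv.resolve_right fun h => h.2 (E.eq_of_mem_path_of_mem (hfg.mem v hv) hx h.1)
    have hentry := hfg.hasPathIn hb hsB hsb.symm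
    have hexit := (hfg.hasPathIn haB haB rfl).symm
    refine ⟨a, haA, ((hentry.trans harc fun x hx hxB => hmeet hsB hxB hx).trans hexit ?_).mono
      (Set.subset_univ _) (by omega)⟩
    rintro x ((rfl | hxs) | hxB) hxa
    · exact hmeet haB hsB hxa
    · refine hxa.resolve_right fun hxa => hgas ?_
      exact E.eq_of_mem_path (hfg.mem a haB) (hfg.mem s hsB) hxa.1 hxs.1
    · exact hmeet haB hxB hxa

theorem IsMaximal.degree_tip_lt_add_card_of_length_eq_zero (hE : E.IsMaximal)
    (h : IsLongestCyclicSeq G n u) (hv : v ∈ cyclicVerts n u) (hlen : (E.path v).length = 0) :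
    G.degree (E.tip v) < n + ((cyclicVerts n u).filter fun r => v ∈ E.satellites r).card := by
  have htip : E.tip v = v := (Walk.eq_of_length_eq_zero hlen).symm
  have hsub : G.neighborFinset v ⊆ (cyclicVerts n u).erase v ∪
      ((cyclicVerts n u).filter fun r => v ∈ E.satellites r).image fun r => (E.path r).snd := by
    intro x hx
    rw [mem_neighborFinset] at hx
    obtain ⟨r, hr, hxr⟩ := hE.exists_mem_path_of_adj_tip hv (htip.symm ▸ hx)
    by_cases hxB : x ∈ cyclicVerts n u
    · exact Finset.mem_union_left _ (Finset.mem_erase.2 ⟨hx.ne', hxB⟩)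
    · have hxr' : x ≠ r := fun h => hxB (h ▸ hr)
      have hvr : v ≠ r := by
        rintro rfl
        exact hxr' (eq_of_mem_path_of_length_eq_zero hlen hxr)
      have hsnd := hE.eq_snd_of_adj hr hv hvr hlen hx hxr hxr'
      have hpos : 0 < (E.path r).length := Nat.pos_of_ne_zero fun h0 =>
        hxr' (eq_of_mem_path_of_length_eq_zero h0 hxr)
      refine Finset.mem_union_right _ (Finset.mem_image.2 ⟨r, ?_, hsnd.symm⟩)
      exact Finset.mem_filter.2 ⟨hr, mem_satellites.2 ⟨hv, hpos, hlen, hsnd ▸ hx⟩⟩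
  have hcard := (Finset.card_le_card hsub).trans
    ((Finset.card_union_le _ _).trans (Nat.add_le_add_left Finset.card_image_le _))
  rw [htip, ← G.card_neighborFinset_eq_degree]
  rw [Finset.card_erase_of_mem hv, h.card_cyclicVerts] at hcard
  have := h.pos
  omega

theorem IsAssignment.degree_add_card_lt (hfg : E.IsAssignment g f) (hE : E.IsMaximal)
    (h : IsLongestCyclicSeq G n u) (hv : v ∈ cyclicVerts n u) :
    G.degree (f v) + (E.openSatellites v).card <
      n + ((cyclicVerts n u).filter fun r => v ∈ E.openSatellites r).card := by
  have hclosed_empty (hv : E.IsClosed v) : E.openSatellites v = ∅ := if_pos hv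
  have htrivial_empty (hlen : (E.path v).length = 0) : E.openSatellites v = ∅ :=
    Finset.eq_empty_of_forall_notMem fun w hw => by
      have := (mem_satellites.1 (mem_openSatellites.1 hw).2).2.1
      omega
  by_cases hg : E.IsClosed (g v)
  · have hempty : E.openSatellites v = ∅ := by
      obtain hgv | hsat := Finset.mem_insert.1 (hfg.mem_insert v hv hg)
      · exact hclosed_empty (hgv ▸ hg)
      · exact htrivial_empty (mem_satellites.1 hsat).2.2.1
    have := hE.degree_lt_of_mem_rotationEnds h (hfg.mem v hv) (hfg.mem_rotationEnds v hv hg)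
    rw [hempty, Finset.card_empty]
    omega
  have hv_open : ¬E.IsClosed v := hfg.eq_self v hv hg ▸ hg
  rw [hfg.eq_tip v hv hg]
  obtain hlen | hlen := Nat.eq_zero_or_pos (E.path v).length
  · have hfilter : ((cyclicVerts n u).filter fun r => v ∈ E.openSatellites r) =
        (cyclicVerts n u).filter fun r => v ∈ E.satellites r :=
      Finset.filter_congr fun r hr => by
        rw [mem_openSatellites, and_iff_right_of_imp fun hvr hclosed =>
          hfg.notMem_satellites v hv hg r hr hclosed hvr]
    rw [htrivial_empty hlen, hfilter]
    exact hE.degree_tip_lt_add_card_of_length_eq_zero h hv hlen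
  · have := (hE.degree_tip_add_card_satellites_lt_or_isClosed h hv hlen).resolve_right hv_open
    rw [openSatellites, if_neg hv_open]
    omega

theorem IsAssignment.sum_degree_add_one_le (hfg : E.IsAssignment g f) (hE : E.IsMaximal)
    (h : IsLongestCyclicSeq G n u) : ∑ v ∈ cyclicVerts n u, (G.degree (f v) + 1) ≤ n * n := by
  have hpoint := Finset.sum_le_sum fun v hv => Nat.succ_le_of_lt (hfg.degree_add_card_lt hE h hv)
  have hsub (v : α) : E.openSatellites v ⊆ cyclicVerts n u := fun w hw =>
    (mem_satellites.1 (mem_openSatellites.1 hw).2).1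
  have hcount : ∑ v ∈ cyclicVerts n u, (E.openSatellites v).card =
      ∑ v ∈ cyclicVerts n u, ((cyclicVerts n u).filter fun r => v ∈ E.openSatellites r).card := by
    refine Eq.trans (Finset.sum_congr rfl fun v _ => ?_)
      (Finset.sum_card_bipartiteAbove_eq_sum_card_bipartiteBelow fun r v => v ∈ E.openSatellites r)
    rw [Finset.bipartiteAbove, Finset.filter_mem_eq_inter, Finset.inter_eq_right.2 (hsub v)]
  simp only [Nat.succ_eq_add_one, Finset.sum_add_distrib, Finset.sum_const, h.card_cyclicVerts,
    smul_eq_mul] at hpoint ⊢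
  omega

end Longest

end PathExtension

variable [Fintype α]

theorem IsLongestCyclicSeq.exists_isSpread {n : ℕ} {u : ℕ → α} (h : IsLongestCyclicSeq G n u) :
    ∃ f : α → α, IsSpread G Set.univ (cyclicVerts n u) f ∧
      ∑ v ∈ cyclicVerts n u, (G.degree (f v) + 1) ≤ n * n := by
  obtain ⟨E, hE⟩ := PathExtension.exists_isMaximal G (cyclicVerts n u)
  obtain ⟨g, f, hfg⟩ := E.exists_isAssignment
  exact ⟨f, hfg.isSpread h.toIsCyclicSeq, hfg.sum_degree_add_one_le hE h⟩

end SpreadFamilies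

section Attachments

variable {α ι : Type*} {G : SimpleGraph α} [DecidableRel G.Adj] {n : ℕ}
  {c : ℕ → α} {I : Finset ι} {f : ι → α}

/-- The indices of the members of the family `f` that are adjacent to `x`. -/
def attachments (G : SimpleGraph α) [DecidableRel G.Adj] (I : Finset ι) (f : ι → α) (x : α) :
    Finset ι :=
  I.filter fun i => G.Adj (f i) x

theorem IsSpread.hasEar {C : Finset α} (hf : IsSpread G (C : Set α)ᶜ I f) {v w : α} (hv : v ∈ C)
    (hw : w ∈ C) (hvw : v ≠ w) (hAv : (attachments G I f v).Nonempty)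
    (hAw : (attachments G I f w).Nonempty) :
    HasEar G C v w ((attachments G I f w).card + 1) := by
  obtain ⟨b, hb⟩ := hAv
  obtain ⟨hbI, hbv⟩ := Finset.mem_filter.1 hb
  obtain ⟨a, ha, hpath⟩ := hf b hbI (attachments G I f w) (Finset.filter_subset _ _) hAw
  have hv' : v ∉ (C : Set α)ᶜ := fun h => h hv
  have hw' : w ∉ insert v (C : Set α)ᶜ := by
    rintro (rfl | h)
    exacts [hvw rfl, h hw]
  have hpos := Finset.card_pos.2 ⟨a, ha⟩
  refine ((hpath.cons hbv.symm hv').concat (Finset.mem_filter.1 ha).2 hw').mono ?_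
    (by omega)
  rintro x (rfl | rfl | hx) hxC
  exacts [Or.inr rfl, Or.inl rfl, absurd hxC hx]

theorem IsSpread.exists_hasEar {C : Finset α} (hf : IsSpread G (C : Set α)ᶜ I f) {v w : α}
    (hv : v ∈ C) (hw : w ∈ C) (hvw : v ≠ w) (hAv : (attachments G I f v).Nonempty)
    (hAw : (attachments G I f w).Nonempty) :
    ∃ ℓ, (attachments G I f v).card + 1 + ((attachments G I f w).card + 1) ≤ 2 * ℓ ∧
      HasEar G C v w ℓ := by
  obtain hle | hle := le_total (attachments G I f v).card (attachments G I f w).card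
  · exact ⟨_, by omega, hf.hasEar hv hw hvw hAv hAw⟩
  · refine ⟨_, by omega, HasPathIn.mono (hf.hasEar hw hv hvw.symm hAw hAv).symm ?_ le_rfl⟩
    exact fun x hx hxC => (hx hxC).symm

variable [DecidableEq α]

theorem IsLongestCyclicSeq.sum_attachments_add_card_le (h : IsLongestCyclicSeq G n c)
    (hf : IsSpread G (cyclicVerts n c : Set α)ᶜ I f)
    (hcard : 2 ≤ ((cyclicVerts n c).filter fun x => (attachments G I f x).Nonempty).card) :
    ∑ x ∈ cyclicVerts n c, (attachments G I f x).card +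
      ((cyclicVerts n c).filter fun x => (attachments G I f x).Nonempty).card ≤ n := by
  obtain ⟨v, hv, w, hw, hvw⟩ := Finset.one_lt_card.1 hcard
  rw [Finset.mem_filter] at hv hw
  let ω x := (attachments G I f x).card + if (attachments G I f x).Nonempty then 1 else 0
  have hω {x} (hx : (attachments G I f x).Nonempty) : ω x = (attachments G I f x).card + 1 := by
    simp only [ω, if_pos hx]
  have hne {x} (hx : 0 < ω x) : (attachments G I f x).Nonempty := by
    by_contra hempty
    rw [Finset.not_nonempty_iff_eq_empty] at hempty
    simp [ω, hempty] at hx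
  have := h.sum_le_of_hasEar ω (fun v hv w hw hvw hωv hωw => ?_) hv.1 hw.1 hvw
    (by rw [hω hv.2]; omega) (by rw [hω hw.2]; omega)
  · rwa [Finset.sum_add_distrib, ← Finset.card_filter] at this
  · rw [hω (hne hωv), hω (hne hωw)]
    exact hf.exists_hasEar hv hw hvw (hne hωv) (hne hωw)

theorem IsLongestCyclicSeq.card_add_one_mul_le_of_isSpread (h : IsLongestCyclicSeq G n c)
    (hf : IsSpread G (cyclicVerts n c : Set α)ᶜ I f) (hI : I.Nonempty) {d : ℕ} (hd : 2 ≤ d)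
    (hsum : I.card * d ≤ ∑ i ∈ I, ((cyclicVerts n c).filter fun x => G.Adj (f i) x).card) :
    (I.card + 1) * d ≤ n := by
  set T := (cyclicVerts n c).filter fun x => (attachments G I f x).Nonempty
  have hcount : ∑ i ∈ I, ((cyclicVerts n c).filter fun x => G.Adj (f i) x).card =
      ∑ x ∈ cyclicVerts n c, (attachments G I f x).card :=
    Finset.sum_card_bipartiteAbove_eq_sum_card_bipartiteBelow fun i x => G.Adj (f i) x
  have hT : ∑ x ∈ cyclicVerts n c, (attachments G I f x).card ≤ I.card * T.card := by
    rw [← Finset.sum_filter_of_ne (p := fun x => (attachments G I f x).Nonempty) fun x _ hx =>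
      Finset.card_ne_zero.1 hx, mul_comm]
    exact Finset.sum_le_card_nsmul _ _ _ fun x _ => Finset.card_filter_le _ _
  have hdT : d ≤ T.card := Nat.le_of_mul_le_mul_left ((hsum.trans_eq hcount).trans hT) hI.card_pos
  have hle : ∑ x ∈ cyclicVerts n c, (attachments G I f x).card + T.card ≤ n :=
    h.sum_attachments_add_card_le hf (hd.trans hdT)
  calc (I.card + 1) * d = I.card * d + d := by ring
    _ ≤ n := by omega

end Attachments

section Complement

variable {α : Type*}

theorem IsSpread.map_induce {ι : Type*} {G : SimpleGraph α} {s : Set α} {I : Finset ι} {f : ι → s}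
    (hf : IsSpread (G.induce s) Set.univ I f) : IsSpread G s I fun i => (f i : α) :=
  fun b hb A hA hAne => (hf b hb A hA hAne).imp fun a ha =>
    ⟨ha.1, ha.2.map_induce.mono (by simp) le_rfl⟩

variable [Fintype α] {G : SimpleGraph α} [DecidableRel G.Adj]

theorem degree_le_degree_induce_add {s : Set α} [Fintype s] [DecidableRel (G.induce s).Adj]
    {D : Finset α} (hD : (D : Set α)ᶜ ⊆ s) (a : s) :
    G.degree a ≤ (G.induce s).degree a + (D.filter fun x => G.Adj a x).card := by
  classical
  rw [← G.card_neighborFinset_eq_degree, ← (G.induce s).card_neighborFinset_eq_degree,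
    ← Finset.card_image_of_injective _ Subtype.val_injective]
  refine (Finset.card_le_card fun x hx => ?_).trans (Finset.card_union_le _ _)
  rw [mem_neighborFinset] at hx
  by_cases hxD : x ∈ D
  · exact Finset.mem_union_right _ (Finset.mem_filter.2 ⟨hxD, hx⟩)
  · refine Finset.mem_union_left _ (Finset.mem_image.2 ⟨⟨x, hD hxD⟩, ?_, rfl⟩)
    rwa [mem_neighborFinset]

theorem IsLongestCyclicSeq.mul_minDegree_sub_le [DecidableEq α] {n k : ℕ} {c : ℕ → α} {s : Set α}
    {u : ℕ → s} (h : IsLongestCyclicSeq G n c) (hs : s = (cyclicVerts n c : Set α)ᶜ)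
    (hu : IsLongestCyclicSeq (G.induce s) k u) (hk : k < G.minDegree) :
    (k + 1) * (G.minDegree - k + 1) ≤ n := by
  classical
  subst hs
  obtain ⟨f, hf, hsum⟩ := hu.exists_isSpread
  have hcard := hu.card_cyclicVerts
  have hdeg := Finset.sum_le_sum fun i (_ : i ∈ cyclicVerts k u) =>
    (G.minDegree_le_degree _).trans (degree_le_degree_induce_add subset_rfl (f i))
  rw [← hcard]
  refine h.card_add_one_mul_le_of_isSpread hf.map_induce
    (Finset.card_pos.1 (hcard.symm ▸ hu.pos)) (by omega) ?_
  simp only [Finset.sum_add_distrib, Finset.sum_const, smul_eq_mul, mul_one, hcard]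
    at hdeg hsum ⊢
  zify [hk.le] at hdeg hsum ⊢
  linarith

end Complement

section LongestCycles

variable {α : Type*} {G : SimpleGraph α}

theorem IsCyclicSeq.exists_isCycle {n : ℕ} {u : ℕ → α} (h : IsCyclicSeq G n u) (hn : 3 ≤ n) :
    ∃ (v : α) (w : G.Walk v v), w.IsCycle ∧ n ≤ w.length := by
  obtain ⟨p, hp, hlen, -⟩ := h.hasPathIn (i := 0) (j := n - 1) (by omega) (by omega)
  have hadj : G.Adj (u (n - 1)) (u 0) := by
    have hend := h.adj (by omega) (n - 1)
    have hwrap := h.apply_add_self 0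
    rw [Nat.zero_add] at hwrap
    rwa [Nat.sub_add_cancel (by omega), hwrap] at hend
  refine ⟨_, .cons hadj p, Walk.isCycle_iff_isPath_tail_and_le_length.2 ⟨?_, ?_⟩, ?_⟩
  · simpa using hp
  all_goals rw [Walk.length_cons]; omega

theorem exists_isCyclicSeq_of_isCycle [DecidableEq α] {v : α} {w : G.Walk v v} (hw : w.IsCycle) :
    ∃ u, IsCyclicSeq G w.length u ∧ cyclicVerts w.length u = w.support.toFinset := by
  have hlen := Walk.length_tail_add_one hw.not_nil
  refine ⟨cyclicSeqOfWalk w.tail, ?_, ?_⟩ <;> rw [← hlen]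
  · exact isCyclicSeq_cyclicSeqOfWalk hw.isPath_tail fun _ => w.adj_snd hw.not_nil
  · rw [cyclicVerts_cyclicSeqOfWalk, ← Walk.cons_support_tail hw.not_nil, List.toFinset_cons,
      Finset.insert_eq_of_mem (List.mem_toFinset.2 w.tail.end_mem_support)]

theorem IsLongestCycle.exists_isLongestCyclicSeq [DecidableEq α] {v : α} {w : G.Walk v v}
    (hw : IsLongestCycle w) :
    ∃ u, IsLongestCyclicSeq G w.length u ∧ cyclicVerts w.length u = w.support.toFinset := by
  obtain ⟨u, hu, hverts⟩ := exists_isCyclicSeq_of_isCycle hw.1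
  refine ⟨u, ⟨hu, fun m v hv => ?_⟩, hverts⟩
  obtain hm | hm := lt_or_ge m 3
  · exact hm.le.trans hw.1.three_le_length
  · obtain ⟨_, w', hw', hm'⟩ := hv.exists_isCycle hm
    exact hm'.trans (hw.2 _ w' hw')

theorem ExtCycle.exists_isCyclicSeq {W : Set α} {n : ℕ} (h : ExtCycle G W n) :
    ∃ u, IsCyclicSeq G n u := by
  classical
  obtain ⟨rfl, v, -⟩ | ⟨rfl, v, w, hvw, -⟩ | ⟨-, v, w, hw, rfl, -⟩ := h
  · exact ⟨_, isCyclicSeq_cyclicSeqOfWalk (Walk.IsPath.nil (u := v)) (by simp)⟩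
  · exact ⟨_, isCyclicSeq_cyclicSeqOfWalk (Walk.IsPath.of_adj hvw) fun _ => hvw.symm⟩
  · exact (exists_isCyclicSeq_of_isCycle hw).imp fun _ h => h.1

theorem IsCyclicSeq.exists_extCycle {n : ℕ} {u : ℕ → α} (h : IsCyclicSeq G n u) :
    ∃ m W, n ≤ m ∧ ExtCycle G W m := by
  obtain rfl | rfl | hn : n = 1 ∨ n = 2 ∨ 3 ≤ n := by have := h.pos; omega
  · exact ⟨1, _, le_rfl, Or.inl ⟨rfl, u 0, rfl⟩⟩
  · exact ⟨2, _, le_rfl, Or.inr (Or.inl ⟨rfl, _, _, h.adj le_rfl 0, rfl⟩)⟩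
  · obtain ⟨v, w, hw, hlen⟩ := h.exists_isCycle hn
    exact ⟨_, _, hlen, Or.inr (Or.inr ⟨hw.three_le_length, v, w, hw, rfl, rfl⟩)⟩

theorem exists_isLongestCyclicSeq_sSup_extCycle [Finite α]
    (hpos : 0 < sSup {n | ∃ W, ExtCycle G W n}) :
    ∃ u, IsLongestCyclicSeq G (sSup {n | ∃ W, ExtCycle G W n}) u := by
  classical
  have := Fintype.ofFinite α
  have hbdd : BddAbove {n | ∃ W, ExtCycle G W n} := by
    refine ⟨Fintype.card α, ?_⟩
    rintro n ⟨W, hW⟩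
    obtain ⟨u, hu⟩ := hW.exists_isCyclicSeq
    exact hu.card_cyclicVerts ▸ Finset.card_le_univ _
  obtain ⟨W, hW⟩ := Nat.sSup_mem (Set.nonempty_iff_ne_empty.2 fun h => by simp [h] at hpos) hbdd
  obtain ⟨u, hu⟩ := hW.exists_isCyclicSeq
  refine ⟨u, hu, fun m v hv => ?_⟩
  obtain ⟨m', W', hmm', hW'⟩ := hv.exists_extCycle
  exact hmm'.trans (le_csSup hbdd ⟨W', hW'⟩)

end LongestCycles

theorem cycBar_bound (G : SimpleGraph V) [Fintype V] [DecidableRel G.Adj]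
    (v : V) (w : G.Walk v v) (hw : IsLongestCycle w) :
    (w.length : ℤ) ≥ (cycBar G w + 1) * ((G.minDegree : ℤ) - cycBar G w + 1) := by
  classical
  have : Nonempty V := ⟨v⟩
  obtain ⟨c, hc, hverts⟩ := hw.exists_isLongestCyclicSeq
  have hs : {x | x ∉ w.support} = (cyclicVerts w.length c : Set V)ᶜ := by
    ext x
    simp [hverts]
  have hδ : (G.minDegree : ℤ) + 1 ≤ w.length := by exact_mod_cast hc.minDegree_lt
  obtain h0 | hpos := Nat.eq_zero_or_pos (cycBar G w)
  · simpa [h0] using hδ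
  obtain ⟨u, hu⟩ := exists_isLongestCyclicSeq_sSup_extCycle hpos
  change IsLongestCyclicSeq _ (cycBar G w) u at hu
  obtain hlt | heq | hgt := lt_trichotomy (cycBar G w) G.minDegree
  · have := hc.mul_minDegree_sub_le hs hu hlt
    zify [hlt.le] at this
    exact this
  · simpa [heq] using hδ
  · exact (mul_nonpos_of_nonneg_of_nonpos (by positivity) (by omega)).trans (Nat.cast_nonneg _)
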